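/- arXiv:1208.4736 — 2 statements merged into one kernel-verified Lean document; each statement's English description precedes it below -/
import Mathlib

section
/- Let d_1, d_2 be positive integers, let A_1, A_2 > 0, and let S(q) = A_1 e^{−q_2} − A_2 e^{q_1 − 2q_2}, with H the associated Ricci-flat cohomogeneity one Hamiltonian on ℝ²×ℝ². Let F(q,p) = F_{20}(q)p_1² + F_{02}(q)p_2² + F_{11}(q)p_1p_2 + F_1(q)p_1 + F_2(q)p_2 + F_0(q), where all six coefficient functions are C¹ on ℝ², and suppose {F,H} = 0 at every point of V_H. If in addition d_1 ≠ 1, d_2 ≠ 2, and 9d_1 ≠ d_2(d_1 − 4), then F is a trivial first integral: there exist a C¹ function φ : ℝ² → ℝ and a constant c ∈ ℝ such that F(q,p) = φ(q)·H(q,p) + c for all (q,p) ∈ ℝ²×ℝ². -/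
/-- Partial derivative in the `i`-th `q`-coordinate. -/
noncomputable def pderivQ (F : (Fin 2 → ℝ) → (Fin 2 → ℝ) → ℝ) (i : Fin 2)
    (q p : Fin 2 → ℝ) : ℝ :=
  deriv (fun t => F (Function.update q i t) p) (q i)

/-- Partial derivative in the `i`-th `p`-coordinate. -/
noncomputable def pderivP (F : (Fin 2 → ℝ) → (Fin 2 → ℝ) → ℝ) (i : Fin 2)
    (q p : Fin 2 → ℝ) : ℝ :=
  deriv (fun t => F q (Function.update p i t)) (p i)

/-- Canonical Poisson bracket on `ℝ² × ℝ²`. -/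
noncomputable def poisson (F G : (Fin 2 → ℝ) → (Fin 2 → ℝ) → ℝ) (q p : Fin 2 → ℝ) : ℝ :=
  ∑ i : Fin 2, (pderivQ F i q p * pderivP G i q p - pderivP F i q p * pderivQ G i q p)

/-- Relative volume `v(q) = exp((d₁q₁ + d₂q₂)/2)`. -/
noncomputable def vol (d1 d2 : ℕ) (q : Fin 2 → ℝ) : ℝ :=
  Real.exp (((d1 : ℝ) * q 0 + (d2 : ℝ) * q 1) / 2)

/-- The quadratic form `J(p) = (p₁+p₂)²/(n−1) − p₁²/d₁ − p₂²/d₂`, `n = d₁+d₂`. -/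
noncomputable def Jform (d1 d2 : ℕ) (p : Fin 2 → ℝ) : ℝ :=
  (1 / ((d1 : ℝ) + (d2 : ℝ) - 1)) * (p 0 + p 1) ^ 2 - (p 0) ^ 2 / (d1 : ℝ) -
    (p 1) ^ 2 / (d2 : ℝ)

/-- The Ricci-flat cohomogeneity one Hamiltonian `H(q,p) = v(q)⁻¹ J(p) − S(q) v(q)`. -/
noncomputable def Ham (d1 d2 : ℕ) (S : (Fin 2 → ℝ) → ℝ) (q p : Fin 2 → ℝ) : ℝ :=
  (vol d1 d2 q)⁻¹ * Jform d1 d2 p - S q * vol d1 d2 q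

/-!
Put `W = v² S`, which for the potentials at hand is again a sum of two exponentials, so that
`v H = J - W` and the bracket with `H` is a nonzero multiple of the bracket with `J - W` along
`H = 0`. The form `J` is hyperbolic, and in linear null coordinates `J - W` becomes `p₀ p₁ - W`.
On the hyperbola `p₀ p₁ = W` the bracket is a polynomial in `p₀` plus a polynomial in `p₁`, so its
coefficients all vanish. Hence for `F = A p₀² + B p₁² + C p₀ p₁ + f p₀ + g p₁ + k` the functions
`A`, `f` depend only on `q₀`, the functions `B`, `g` only on `q₁`, and they satisfy one equation for
`f`, `g` and two for `A`, `B` whose right-hand sides form the gradient of `-(k + C W)`. Both systems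
equate a sum `∑ i, exp (b i w) M i (u)` with a sum `∑ j, exp (a j u) N j (w)`, which forces each
`M i` to be a combination of the exponentials `exp (a j u)`. The resulting pair of constant
coefficient equations for one function of `u` is overdetermined: when the exponents of `W` are in
general position its solutions are exponential trinomials, and comparing coefficients leaves only
`A = B = f = g = 0`. Then `k + C W` is a constant and `F` differs from `C (p₀ p₁ - W)` by it.
-/

section Development

open Real Matrix Filter Topology

section Separation

variable {K X Y ι κ : Type*} [Field K] [Fintype ι] [Fintype κ]

theorem exists_coeff_of_sum_mul_eq_sum_mul {g : ι → X → K} {h : κ → Y → K}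
    (hg : LinearIndependent K g) (hh : LinearIndependent K h) {M : ι → Y → K} {N : κ → X → K}
    (heq : ∀ x y, ∑ i, g i x * M i y = ∑ j, h j y * N j x) :
    ∃ c : Matrix ι κ K,
      (∀ i y, M i y = ∑ j, c i j * h j y) ∧ ∀ j x, N j x = ∑ i, c i j * g i x := by
  classical
  obtain ⟨dual, hdual⟩ := (Fintype.linearCombination K g).exists_leftInverse_of_injective
    (LinearMap.ker_eq_bot.2 hg.fintypeLinearCombination_injective)
  have hM : ∀ i y, M i y = ∑ j, dual (N j) i * h j y := by
    intro i y
    have hsum : Fintype.linearCombination K g (M · y) = ∑ j, h j y • N j := by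
      ext x
      simpa [Fintype.linearCombination_apply, mul_comm] using heq x y
    have := congr_fun (LinearMap.congr_fun hdual (M · y)) i
    simpa [hsum, mul_comm] using this.symm
  refine ⟨fun i j => dual (N j) i, hM, fun j x => ?_⟩
  refine sub_eq_zero.1 (Fintype.linearIndependent_iff.1 hh
    (fun j => N j x - ∑ i, dual (N j) i * g i x) ?_ j)
  ext y
  have key : ∑ j, h j y * N j x = ∑ j, h j y * ∑ i, dual (N j) i * g i x := by
    simp only [← heq, hM, Finset.mul_sum]
    rw [Finset.sum_comm]
    exact Finset.sum_congr rfl fun _ _ => Finset.sum_congr rfl fun _ _ => by ring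
  simp [mul_sub, mul_comm _ (h _ y), key]

end Separation

theorem linearIndependent_exp_mul {ι : Type*} {a : ι → ℝ} (ha : Function.Injective a) :
    LinearIndependent ℝ fun i u => exp (a i * u) := by
  let χ (i : ι) : Multiplicative ℝ →* ℝ :=
    { toFun := fun u => exp (a i * u.toAdd)
      map_one' := by simp
      map_mul' := fun u v => by simp [mul_add, exp_add] }
  have hχ : Function.Injective χ := fun i j hij => ha (by
    simpa [χ] using DFunLike.congr_fun hij (Multiplicative.ofAdd 1))
  exact (linearIndependent_monoidHom (Multiplicative ℝ) ℝ).comp χ hχ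

theorem linearIndependent_of_hasDerivAt {ι : Type*} {G g : ι → ℝ → ℝ}
    (hg : LinearIndependent ℝ g) (hG : ∀ i x, HasDerivAt (G i) (g i x) x) :
    LinearIndependent ℝ G := by
  rw [linearIndependent_iff'] at hg ⊢
  intro s c hc
  refine hg s c (funext fun x => ?_)
  have hd := HasDerivAt.sum (u := s) fun i _ => (hG i x).const_smul (c i)
  rw [hc] at hd
  simpa using hd.unique (hasDerivAt_const x 0)

theorem exists_coeff_of_separated_gradient {ι κ : Type*} [Fintype ι] [Fintype κ]
    {g : ι → ℝ → ℝ} {h : κ → ℝ → ℝ} (hgc : ∀ i, Continuous (g i)) (hhc : ∀ j, Continuous (h j))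
    (hg : LinearIndependent ℝ g) (hh : LinearIndependent ℝ h)
    {f : ℝ → ℝ → ℝ} {M : ι → ℝ → ℝ} {N : κ → ℝ → ℝ}
    (hw : ∀ u w, HasDerivAt (fun w => f u w) (∑ i, g i w * M i u) w)
    (hu : ∀ u w, HasDerivAt (fun u => f u w) (∑ j, h j u * N j w) u) :
    ∃ c : Matrix ι κ ℝ,
      (∀ i u, HasDerivAt (M i) (∑ j, c i j * h j u) u) ∧
      ∀ j w, HasDerivAt (N j) (∑ i, c i j * g i w) w := by
  -- The mixed increment of `f` over the rectangle from `(0, 0)` to `(u, w)`, computed along both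
  -- pairs of sides, is a separated identity in the primitives `G` and `H`.
  let G i w := ∫ s in (0 : ℝ)..w, g i s
  let H j u := ∫ s in (0 : ℝ)..u, h j s
  have hG i w : HasDerivAt (G i) (g i w) w := (hgc i).integral_hasStrictDerivAt 0 w |>.hasDerivAt
  have hH j u : HasDerivAt (H j) (h j u) u := (hhc j).integral_hasStrictDerivAt 0 u |>.hasDerivAt
  have increment_w u w : ∑ i, G i w * M i u = f u w - f u 0 := by
    rw [← intervalIntegral.integral_eq_sub_of_hasDerivAt (fun s _ => hw u s)
      (by apply Continuous.intervalIntegrable; fun_prop),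
      intervalIntegral.integral_finsetSum
        fun i _ => ((hgc i).mul_const _).intervalIntegrable _ _]
    simp only [G, intervalIntegral.integral_mul_const]
  have increment_u u w : ∑ j, H j u * N j w = f u w - f 0 w := by
    rw [← intervalIntegral.integral_eq_sub_of_hasDerivAt (fun s _ => hu s w)
      (by apply Continuous.intervalIntegrable; fun_prop),
      intervalIntegral.integral_finsetSum
        fun j _ => ((hhc j).mul_const _).intervalIntegrable _ _]
    simp only [H, intervalIntegral.integral_mul_const]
  obtain ⟨c, hM, hN⟩ := exists_coeff_of_sum_mul_eq_sum_mul
    (linearIndependent_of_hasDerivAt hg hG) (linearIndependent_of_hasDerivAt hh hH)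
    (M := fun i u => M i u - M i 0) (N := fun j w => N j w - N j 0) fun w u => by
      simp only [mul_sub, Finset.sum_sub_distrib, increment_w, increment_u]
      ring
  refine ⟨c, fun i u => ?_, fun j w => ?_⟩
  · rw [show M i = fun u => ∑ j, c i j * H j u + M i 0 from
      funext fun u => sub_eq_iff_eq_add.1 (hM i u)]
    exact (HasDerivAt.fun_sum fun j _ => (hH j u).const_mul (c i j)).add_const _
  · rw [show N j = fun w => ∑ i, c i j * G i w + N j 0 from
      funext fun w => sub_eq_iff_eq_add.1 (hN j w)]
    exact (HasDerivAt.fun_sum fun i _ => (hG i w).const_mul (c i j)).add_const _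

theorem polynomials_eq_zero_of_vanish_on_hyperbola {P R : Polynomial ℝ} {m : ℝ}
    (h : ∀ ξ η : ℝ, ξ * η = m → P.eval ξ + η * R.eval η = 0) : P = 0 ∧ R = 0 := by
  have hP : P = 0 := by
    have hη : Tendsto (fun ξ : ℝ => m * ξ⁻¹) atTop (𝓝 0) := by
      simpa using tendsto_inv_atTop_zero.const_mul m
    have hlim : Tendsto (fun ξ => P.eval ξ) atTop (𝓝 0) := by
      have := (hη.mul ((R.continuous.tendsto 0).comp hη)).neg
      rw [zero_mul, neg_zero] at this
      refine this.congr' ?_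
      filter_upwards [eventually_ne_atTop 0] with ξ hξ
      rw [neg_eq_iff_add_eq_zero, add_comm]
      exact h ξ _ (by field_simp)
    exact Polynomial.leadingCoeff_eq_zero.1 (P.tendsto_nhds_iff.1 hlim).1
  have hlim : Tendsto (fun η => R.eval η) atTop (𝓝 0) := by
    refine tendsto_const_nhds.congr' ?_
    filter_upwards [eventually_ne_atTop 0] with η hη
    have := h (m * η⁻¹) η (by field_simp)
    simpa [hP, hη, eq_comm] using this
  exact ⟨hP, Polynomial.leadingCoeff_eq_zero.1 (R.tendsto_nhds_iff.1 hlim).1⟩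

theorem cubic_coeffs_eq_zero_of_vanish_on_hyperbola {m c₀ c₁ c₂ c₃ d₁ d₂ d₃ : ℝ}
    (h : ∀ ξ η : ℝ, ξ * η = m →
      c₃ * ξ ^ 3 + c₂ * ξ ^ 2 + c₁ * ξ + c₀ + η * (d₃ * η ^ 2 + d₂ * η + d₁) = 0) :
    c₃ = 0 ∧ c₂ = 0 ∧ c₁ = 0 ∧ c₀ = 0 ∧ d₃ = 0 ∧ d₂ = 0 ∧ d₁ = 0 := by
  obtain ⟨hP, hR⟩ := polynomials_eq_zero_of_vanish_on_hyperbola (m := m)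
    (P := (⟨c₃, c₂, c₁, c₀⟩ : Cubic ℝ).toPoly) (R := (⟨0, d₃, d₂, d₁⟩ : Cubic ℝ).toPoly)
    (by simpa [Cubic.toPoly] using h)
  rw [← Cubic.zero, Cubic.toPoly_injective, Cubic.ext_iff] at hP hR
  exact ⟨hP.1, hP.2.1, hP.2.2.1, hP.2.2.2, hR.2⟩

theorem exp_trinomial_coeffs_eq_zero {c p q r : ℝ} (hc : c ≠ 0)
    (h : ∀ u : ℝ, p + q * exp (c * u) + r * exp (-(c * u)) = 0) : p = 0 ∧ q = 0 ∧ r = 0 := by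
  have hinj : Function.Injective ![0, c, -c] := by
    intro i j
    fin_cases i <;> fin_cases j <;> simp [hc, hc.symm, self_eq_neg, neg_eq_self]
  have := Fintype.linearIndependent_iff.1 (linearIndependent_exp_mul hinj) ![p, q, r]
    (funext fun u => by simpa [Fin.sum_univ_three] using h u)
  exact ⟨this 0, this 1, this 2⟩

theorem hasDerivAt_exp_mul (c u : ℝ) : HasDerivAt (fun u => exp (c * u)) (c * exp (c * u)) u := by
  simpa [mul_comm] using ((hasDerivAt_id u).const_mul c).exp

theorem hasDerivAt_exp_trinomial (c s₀ s₁ s₂ u : ℝ) :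
    HasDerivAt (fun u => s₀ + s₁ * exp (c * u) + s₂ * exp (-(c * u)))
      (c * s₁ * exp (c * u) - c * s₂ * exp (-(c * u))) u := by
  have h := hasDerivAt_exp_mul (-c) u
  simp only [neg_mul] at h
  exact ((((hasDerivAt_exp_mul c u).const_mul s₁).const_add s₀).add
    (h.const_mul s₂)).congr_deriv (by ring)

theorem exp_trinomial_coeffs_of_ode {c s₀ s₁ s₂ m₀ m₁ m₂ l p q : ℝ} (hc : c ≠ 0) {f : ℝ → ℝ}
    (hf : ∀ u, f u = s₀ + s₁ * exp (c * u) + s₂ * exp (-(c * u)))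
    (hode : ∀ u, l * deriv (deriv f) u + p * deriv f u + q * f u =
      m₀ + m₁ * exp (c * u) + m₂ * exp (-(c * u))) :
    q * s₀ = m₀ ∧ (l * c ^ 2 + p * c + q) * s₁ = m₁ ∧ (l * c ^ 2 - p * c + q) * s₂ = m₂ := by
  obtain rfl : f = _ := funext hf
  have hf' : deriv (fun u => s₀ + s₁ * exp (c * u) + s₂ * exp (-(c * u))) =
      fun u => 0 + c * s₁ * exp (c * u) + -(c * s₂) * exp (-(c * u)) :=
    funext fun u => (hasDerivAt_exp_trinomial c s₀ s₁ s₂ u).deriv.trans (by ring)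
  have hf'' u := (hasDerivAt_exp_trinomial c 0 (c * s₁) (-(c * s₂)) u).deriv
  have hcoeffs := exp_trinomial_coeffs_eq_zero hc (p := q * s₀ - m₀)
    (q := (l * c ^ 2 + p * c + q) * s₁ - m₁) (r := (l * c ^ 2 - p * c + q) * s₂ - m₂) fun u => by
      have := hode u
      rw [hf', hf''] at this
      linear_combination this
  simpa only [sub_eq_zero] using hcoeffs

/-- Two exponents `a 0`, `a 1` for which the operators `(D + a i) (D + 2 a i)`, `i = 0, 1`, have
no common characteristic root. -/
structure NonresonantPair (a : Fin 2 → ℝ) : Prop where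
  ne : a 0 ≠ a 1
  ne_two_mul : a 0 ≠ 2 * a 1
  two_mul_ne : a 1 ≠ 2 * a 0

theorem NonresonantPair.injective {a : Fin 2 → ℝ} (ha : NonresonantPair a) :
    Function.Injective a := by
  intro i j
  fin_cases i <;> fin_cases j <;> simp [ha.ne, ha.ne.symm]

theorem NonresonantPair.constant_of_weighted_first_order {a A : Fin 2 → ℝ}
    (ha : NonresonantPair a) (hA : ∀ i, A i ≠ 0) {c : Matrix (Fin 2) (Fin 2) ℝ}
    {f f' : ℝ → ℝ} (hf : ∀ u, HasDerivAt f (f' u) u)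
    (hode : ∀ i u, A i * exp (a i * u) * (f' u + a i * f u) = ∑ j, c i j * exp (a j * u)) :
    ∃ s, (∀ u, f u = s) ∧ ∀ i, A i * a i * s = c i i := by
  have hA0 := hA 0
  have hA1 := hA 1
  have hδ : a 1 - a 0 ≠ 0 := sub_ne_zero.2 ha.ne.symm
  have hode₀ u : f' u + a 0 * f u = c 0 0 / A 0 + c 0 1 / A 0 * exp ((a 1 - a 0) * u) := by
    have := hode 0 u
    rw [Fin.sum_univ_two] at this
    rw [sub_mul, exp_sub]
    field_simp
    linear_combination this
  have hode₁ u : f' u + a 1 * f u = c 1 1 / A 1 + c 1 0 / A 1 * exp (-((a 1 - a 0) * u)) := by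
    have := hode 1 u
    rw [Fin.sum_univ_two] at this
    rw [sub_mul, neg_sub, exp_sub]
    field_simp
    linear_combination this
  obtain ⟨s₀, s₁, s₂, hs⟩ : ∃ s₀ s₁ s₂, ∀ u, f u =
      s₀ + s₁ * exp ((a 1 - a 0) * u) + s₂ * exp (-((a 1 - a 0) * u)) := by
    refine ⟨(c 1 1 / A 1 - c 0 0 / A 0) / (a 1 - a 0), -(c 0 1 / A 0) / (a 1 - a 0),
      c 1 0 / A 1 / (a 1 - a 0), fun u => ?_⟩
    rw [div_mul_eq_mul_div, div_mul_eq_mul_div, ← add_div, ← add_div, eq_div_iff hδ]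
    linear_combination hode₁ u - hode₀ u
  have hderiv : deriv f = f' := funext fun u => (hf u).deriv
  obtain ⟨h₀₀, -, h₀₂⟩ := exp_trinomial_coeffs_of_ode hδ hs (l := 0) (p := 1) (q := a 0)
    (m₀ := c 0 0 / A 0) (m₁ := c 0 1 / A 0) (m₂ := 0)
    fun u => by linear_combination hode₀ u + congr_fun hderiv u
  obtain ⟨h₁₀, h₁₁, -⟩ := exp_trinomial_coeffs_of_ode hδ hs (l := 0) (p := 1) (q := a 1)
    (m₀ := c 1 1 / A 1) (m₁ := 0) (m₂ := c 1 0 / A 1)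
    fun u => by linear_combination hode₁ u + congr_fun hderiv u
  have hs₁ : s₁ = 0 := (mul_eq_zero.1 h₁₁).resolve_left fun h => ha.ne_two_mul (by linarith)
  have hs₂ : s₂ = 0 := (mul_eq_zero.1 h₀₂).resolve_left fun h => ha.two_mul_ne (by linarith)
  refine ⟨s₀, fun u => by simp [hs, hs₁, hs₂], Fin.forall_fin_two.2 ⟨?_, ?_⟩⟩
  · rw [mul_assoc, h₀₀, mul_div_cancel₀ _ hA0]
  · rw [mul_assoc, h₁₀, mul_div_cancel₀ _ hA1]

theorem hasDerivAt_deriv_of_weighted {a A d : ℝ} (hA : A ≠ 0) {f f' : ℝ → ℝ} {u : ℝ}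
    (hf : ∀ u, HasDerivAt f (f' u) u)
    (h : HasDerivAt (fun u => A * exp (a * u) * (f' u + 2 * a * f u)) d u) :
    HasDerivAt f' (d / (A * exp (a * u)) - 3 * a * f' u - 2 * a ^ 2 * f u) u := by
  have hf' u : f' u =
      exp (-a * u) / A * (A * exp (a * u) * (f' u + 2 * a * f u)) - 2 * a * f u := by
    simp only [neg_mul, exp_neg]
    field_simp
    ring
  refine (((((hasDerivAt_exp_mul (-a) u).div_const A).mul h).sub
    ((hf u).const_mul (2 * a))).congr_of_eventuallyEq (.of_forall hf')).congr_deriv ?_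
  simp only [neg_mul, exp_neg]
  field_simp
  ring

theorem NonresonantPair.exists_exp_trinomial_of_ode {a : Fin 2 → ℝ} (ha : NonresonantPair a)
    {m₀ m₁ n₀ n₁ : ℝ} {f f' f'' : ℝ → ℝ} (hf : ∀ u, HasDerivAt f (f' u) u)
    (hf' : ∀ u, HasDerivAt f' (f'' u) u)
    (hode₀ : ∀ u, f'' u + 3 * a 0 * f' u + 2 * a 0 ^ 2 * f u =
      m₀ + m₁ * exp ((a 1 - a 0) * u))
    (hode₁ : ∀ u, f'' u + 3 * a 1 * f' u + 2 * a 1 ^ 2 * f u =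
      n₀ + n₁ * exp (-((a 1 - a 0) * u))) :
    ∃ s₀ s₁ s₂, ∀ u, f u =
      s₀ + s₁ * exp ((a 1 - a 0) * u) + s₂ * exp (-((a 1 - a 0) * u)) := by
  set δ := a 1 - a 0 with hδ
  have hdiff u : 3 * δ * f' u + 2 * δ * (a 0 + a 1) * f u =
      (n₀ - m₀) + -m₁ * exp (δ * u) + n₁ * exp (-(δ * u)) := by
    linear_combination hode₁ u - hode₀ u + (3 * f' u + 2 * (a 0 + a 1) * f u) * hδ
  have hdiff' u : 3 * δ * f'' u + 2 * δ * (a 0 + a 1) * f' u =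
      δ * -m₁ * exp (δ * u) - δ * n₁ * exp (-(δ * u)) :=
    (((hf' u).const_mul _).add ((hf u).const_mul _)).unique
      ((hasDerivAt_exp_trinomial δ (n₀ - m₀) (-m₁) n₁ u).congr_of_eventuallyEq (.of_forall hdiff))
  set D := 2 * δ * (a 0 - 2 * a 1) * (2 * a 0 - a 1)
  have hD : D ≠ 0 := by
    simp [D, δ, sub_eq_zero, ha.ne.symm, ha.ne_two_mul, ha.two_mul_ne.symm]
  -- Eliminating the derivatives leaves `D * f u` alone on the left: `D` is the resultant of the
  -- characteristic polynomials `(X + a i) * (X + 2 * a i)` up to the factor `δ`.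
  refine ⟨(9 * δ * m₀ - (7 * a 0 - 2 * a 1) * (n₀ - m₀)) / D,
    (12 * δ + (7 * a 0 - 2 * a 1)) * m₁ / D,
    (3 * δ - (7 * a 0 - 2 * a 1)) * n₁ / D, fun u => mul_right_cancel₀ hD ?_⟩
  rw [div_mul_eq_mul_div, div_mul_eq_mul_div, ← add_div, ← add_div, div_mul_cancel₀ _ hD]
  linear_combination 9 * δ * hode₀ u - 3 * hdiff' u - (7 * a 0 - 2 * a 1) * hdiff u

theorem NonresonantPair.exp_trinomial_of_weighted_second_order {a A : Fin 2 → ℝ}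
    (ha : NonresonantPair a) (hA : ∀ i, A i ≠ 0) {c : Matrix (Fin 2) (Fin 2) ℝ}
    {f f' : ℝ → ℝ} (hf : ∀ u, HasDerivAt f (f' u) u)
    (hode : ∀ i u, HasDerivAt (fun u => A i * exp (a i * u) * (f' u + 2 * a i * f u))
      (∑ j, c i j * exp (a j * u)) u) :
    ∃ s₀ s₁ s₂, (∀ u, f u =
        s₀ + s₁ * exp ((a 1 - a 0) * u) + s₂ * exp (-((a 1 - a 0) * u))) ∧
      (∀ i, A i * (2 * a i ^ 2) * s₀ = c i i) ∧
      (3 * a 1 - a 0) * s₁ = 0 ∧ A 0 * (a 1 * (a 0 + a 1)) * s₁ = c 0 1 ∧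
      (3 * a 0 - a 1) * s₂ = 0 ∧ A 1 * (a 0 * (a 0 + a 1)) * s₂ = c 1 0 := by
  have hA0 := hA 0
  have hA1 := hA 1
  have hδ : a 1 - a 0 ≠ 0 := sub_ne_zero.2 ha.ne.symm
  have hf' i u := hasDerivAt_deriv_of_weighted (hA i) hf (hode i u)
  have hderiv : deriv f = f' := funext fun u => (hf u).deriv
  have hderiv₂ i u := (hf' i u).deriv
  have hode₀ u : deriv f' u + 3 * a 0 * f' u + 2 * a 0 ^ 2 * f u =
      c 0 0 / A 0 + c 0 1 / A 0 * exp ((a 1 - a 0) * u) := by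
    rw [hderiv₂ 0, Fin.sum_univ_two, sub_mul, exp_sub]
    field_simp
    ring
  have hode₁ u : deriv f' u + 3 * a 1 * f' u + 2 * a 1 ^ 2 * f u =
      c 1 1 / A 1 + c 1 0 / A 1 * exp (-((a 1 - a 0) * u)) := by
    rw [hderiv₂ 1, Fin.sum_univ_two, sub_mul, neg_sub, exp_sub]
    field_simp
    ring
  obtain ⟨s₀, s₁, s₂, hs⟩ := ha.exists_exp_trinomial_of_ode hf
    (fun u => (hf' 0 u).differentiableAt.hasDerivAt) hode₀ hode₁
  obtain ⟨h₀₀, h₀₁, h₀₂⟩ := exp_trinomial_coeffs_of_ode hδ hs (l := 1) (p := 3 * a 0)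
    (q := 2 * a 0 ^ 2) (m₀ := c 0 0 / A 0) (m₁ := c 0 1 / A 0) (m₂ := 0)
    fun u => by rw [hderiv]; linear_combination hode₀ u
  obtain ⟨h₁₀, h₁₁, h₁₂⟩ := exp_trinomial_coeffs_of_ode hδ hs (l := 1) (p := 3 * a 1)
    (q := 2 * a 1 ^ 2) (m₀ := c 1 1 / A 1) (m₁ := 0) (m₂ := c 1 0 / A 1)
    fun u => by rw [hderiv]; linear_combination hode₁ u
  refine ⟨s₀, s₁, s₂, hs, Fin.forall_fin_two.2 ⟨?_, ?_⟩, ?_, ?_, ?_, ?_⟩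
  · rw [mul_assoc, h₀₀, mul_div_cancel₀ _ hA0]
  · rw [mul_assoc, h₁₀, mul_div_cancel₀ _ hA1]
  · refine (mul_eq_zero.1 ?_).resolve_left (sub_ne_zero.2 ha.ne_two_mul)
    linear_combination -h₁₁
  · rw [← mul_div_cancel₀ (c 0 1) hA0, ← h₀₁]
    ring
  · refine (mul_eq_zero.1 ?_).resolve_left (sub_ne_zero.2 ha.two_mul_ne)
    linear_combination -h₀₂
  · rw [← mul_div_cancel₀ (c 1 0) hA1, ← h₁₂]
    ring

theorem resonant_coeffs_eq_zero {a₀ a₁ b₀ b₁ A B s t : ℝ} (ha : a₀ ≠ a₁) (hb : b₀ ≠ b₁)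
    (hprod : a₀ * b₀ ≠ a₁ * b₁) (hA : A ≠ 0) (hB : B ≠ 0) (hs : (3 * a₁ - a₀) * s = 0)
    (ht : (3 * b₀ - b₁) * t = 0)
    (hst : A * (a₁ * (a₀ + a₁)) * s = B * (b₀ * (b₀ + b₁)) * t) : s = 0 ∧ t = 0 := by
  rcases mul_eq_zero.1 hs with ha' | rfl <;> rcases mul_eq_zero.1 ht with hb' | rfl
  · exact absurd (by linear_combination a₁ * hb' - b₀ * ha') hprod
  · obtain rfl : a₀ = 3 * a₁ := by linarith
    have ha₁ : a₁ ≠ 0 := by rintro rfl; simp at ha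
    exact ⟨by simpa [hA, ha₁, show 3 * a₁ + a₁ = 4 * a₁ by ring] using hst, rfl⟩
  · obtain rfl : b₁ = 3 * b₀ := by linarith
    have hb₀ : b₀ ≠ 0 := by rintro rfl; simp at hb
    exact ⟨rfl, by simpa [hB, hb₀, show b₀ + 3 * b₀ = 4 * b₀ by ring] using hst.symm⟩
  · exact ⟨rfl, rfl⟩

section SeparatedSystems

variable {A a b : Fin 2 → ℝ} {α α' γ γ' : ℝ → ℝ}

theorem eq_zero_of_separated_first_order (ha : NonresonantPair a) (hb : NonresonantPair b)
    (hA : ∀ i, A i ≠ 0) (hdet : a 0 * b 1 ≠ a 1 * b 0)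
    (hα : ∀ u, HasDerivAt α (α' u) u) (hγ : ∀ w, HasDerivAt γ (γ' w) w)
    (h : ∀ u w, ∑ i, A i * exp (a i * u) * exp (b i * w) *
      (α' u + γ' w + a i * α u + b i * γ w) = 0) :
    (∀ u, α u = 0) ∧ ∀ w, γ w = 0 := by
  obtain ⟨c, hM, hN⟩ := exists_coeff_of_sum_mul_eq_sum_mul
    (linearIndependent_exp_mul hb.injective) (linearIndependent_exp_mul ha.injective)
    (M := fun i u => A i * exp (a i * u) * (α' u + a i * α u))
    (N := fun i w => -A i * exp (b i * w) * (γ' w + b i * γ w)) fun w u => by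
      rw [← sub_eq_zero, ← h u w, ← Finset.sum_sub_distrib]
      exact Finset.sum_congr rfl fun i _ => by ring
  obtain ⟨s, hs, hsc⟩ := ha.constant_of_weighted_first_order hA hα hM
  obtain ⟨t, ht, htc⟩ := hb.constant_of_weighted_first_order
    (fun i => neg_ne_zero.2 (hA i)) (c := cᵀ) hγ hN
  have hst i : a i * s + b i * t = 0 := mul_left_cancel₀ (hA i) (by
    linear_combination (hsc i).trans (htc i).symm)
  have hs₀ : s = 0 := mul_left_cancel₀ (sub_ne_zero.2 hdet) (by
    linear_combination b 1 * hst 0 - b 0 * hst 1)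
  have ht₀ : t = 0 := mul_left_cancel₀ (sub_ne_zero.2 hdet) (by
    linear_combination a 0 * hst 1 - a 1 * hst 0)
  exact ⟨fun u => (hs u).trans hs₀, fun w => (ht w).trans ht₀⟩

theorem eq_zero_of_separated_second_order (ha : NonresonantPair a) (hb : NonresonantPair b)
    (hA : ∀ i, A i ≠ 0) (hdet : a 0 * b 1 ≠ a 1 * b 0) (hperm : a 0 * b 1 + a 1 * b 0 ≠ 0)
    (hprod : a 0 * b 0 ≠ a 1 * b 1) {f : ℝ → ℝ → ℝ}
    (hα : ∀ u, HasDerivAt α (α' u) u) (hγ : ∀ w, HasDerivAt γ (γ' w) w)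
    (hw : ∀ u w, HasDerivAt (fun w => f u w)
      (∑ i, A i * exp (a i * u) * exp (b i * w) * (α' u + 2 * a i * α u)) w)
    (hu : ∀ u w, HasDerivAt (fun u => f u w)
      (∑ i, A i * exp (a i * u) * exp (b i * w) * (γ' w + 2 * b i * γ w)) u) :
    (∀ u, α u = 0) ∧ ∀ w, γ w = 0 := by
  obtain ⟨c, hM, hN⟩ := exists_coeff_of_separated_gradient (f := f)
    (fun i => by fun_prop) (fun i => by fun_prop)
    (linearIndependent_exp_mul hb.injective) (linearIndependent_exp_mul ha.injective)
    (M := fun i u => A i * exp (a i * u) * (α' u + 2 * a i * α u))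
    (N := fun i w => A i * exp (b i * w) * (γ' w + 2 * b i * γ w))
    (fun u w => (hw u w).congr_deriv (Finset.sum_congr rfl fun i _ => by ring))
    (fun u w => (hu u w).congr_deriv (Finset.sum_congr rfl fun i _ => by ring))
  obtain ⟨s₀, s₁, s₂, hαs, hs₀, hs₁, hs₁c, hs₂, hs₂c⟩ :=
    ha.exp_trinomial_of_weighted_second_order hA hα hM
  obtain ⟨t₀, t₁, t₂, hγt, ht₀, ht₁, ht₁c, ht₂, ht₂c⟩ :=
    hb.exp_trinomial_of_weighted_second_order (c := cᵀ) hA hγ hN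
  obtain ⟨rfl, rfl⟩ := resonant_coeffs_eq_zero ha.ne hb.ne hprod (hA 0) (hA 1) hs₁ ht₂
    (hs₁c.trans ht₂c.symm)
  obtain ⟨rfl, rfl⟩ := resonant_coeffs_eq_zero ha.ne.symm hb.ne.symm hprod.symm (hA 1) (hA 0)
    hs₂ ht₁ (by rw [add_comm (a 1), add_comm (b 1)]; exact hs₂c.trans ht₁c.symm)
  have hst i : a i ^ 2 * s₀ = b i ^ 2 * t₀ := mul_left_cancel₀ (hA i) (by
    linear_combination (hs₀ i).trans (ht₀ i).symm / 2)
  have hD : (a 0 * b 1 - a 1 * b 0) * (a 0 * b 1 + a 1 * b 0) ≠ 0 :=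
    mul_ne_zero (sub_ne_zero.2 hdet) hperm
  have hs : s₀ = 0 := mul_left_cancel₀ hD (by
    linear_combination b 1 ^ 2 * hst 0 - b 0 ^ 2 * hst 1)
  have ht : t₀ = 0 := mul_left_cancel₀ hD (by
    linear_combination a 1 ^ 2 * hst 0 - a 0 ^ 2 * hst 1)
  exact ⟨fun u => by simp [hαs, hs], fun w => by simp [hγt, ht]⟩

end SeparatedSystems

open Function in
/-- The partial derivative of `f` in the `i`-th coordinate, in the form in which `pderivQ` and
`pderivP` unfold to it. -/
noncomputable def partialDeriv (i : Fin 2) (f : (Fin 2 → ℝ) → ℝ) (x : Fin 2 → ℝ) : ℝ :=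
  deriv (fun t => f (update x i t)) (x i)

section PartialDeriv

variable {f : (Fin 2 → ℝ) → ℝ} {i : Fin 2} {x : Fin 2 → ℝ}

theorem partialDeriv_eq_fderiv (hf : DifferentiableAt ℝ f x) :
    partialDeriv i f x = fderiv ℝ f x (Pi.single i 1) := by
  have hf' : HasFDerivAt f (fderiv ℝ f x) (Function.update x i (x i)) := by
    simpa using hf.hasFDerivAt
  exact (hf'.comp_hasDerivAt (x i) (hasDerivAt_update x i (x i))).deriv

theorem hasDerivAt_partialDeriv_zero (hf : Differentiable ℝ f) (u w : ℝ) :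
    HasDerivAt (fun u => f ![u, w]) (partialDeriv 0 f ![u, w]) u := by
  have h := (hf ![u, w]).hasFDerivAt.comp_hasDerivAt u
    (f := fun u => ![u, w]) (f' := Pi.single 0 1) (hasDerivAt_pi.2 (by
      simp [Fin.forall_fin_two, hasDerivAt_id', hasDerivAt_const]))
  rwa [← partialDeriv_eq_fderiv (hf _)] at h

theorem hasDerivAt_partialDeriv_one (hf : Differentiable ℝ f) (u w : ℝ) :
    HasDerivAt (fun w => f ![u, w]) (partialDeriv 1 f ![u, w]) w := by
  have h := (hf ![u, w]).hasFDerivAt.comp_hasDerivAt w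
    (f := fun w => ![u, w]) (f' := Pi.single 1 1) (hasDerivAt_pi.2 (by
      simp [Fin.forall_fin_two, hasDerivAt_id', hasDerivAt_const]))
  rwa [← partialDeriv_eq_fderiv (hf _)] at h

theorem fderiv_apply_eq_dotProduct_partialDeriv (hf : DifferentiableAt ℝ f x) (v : Fin 2 → ℝ) :
    fderiv ℝ f x v = (fun i => partialDeriv i f x) ⬝ᵥ v := by
  conv_lhs => rw [pi_eq_sum_univ' v]
  simp [partialDeriv_eq_fderiv hf, dotProduct, mul_comm]

theorem partialDeriv_comp_mulVec (M : Matrix (Fin 2) (Fin 2) ℝ)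
    (hf : DifferentiableAt ℝ f (M *ᵥ x)) :
    (fun i => partialDeriv i (fun x => f (M *ᵥ x)) x) =
      (fun i => partialDeriv i f (M *ᵥ x)) ᵥ* M := by
  have h : HasFDerivAt (fun x => f (M *ᵥ x)) _ x :=
    hf.hasFDerivAt.comp x (Matrix.mulVecLin M).toContinuousLinearMap.hasFDerivAt
  ext i
  rw [partialDeriv_eq_fderiv h.differentiableAt, h.fderiv]
  change fderiv ℝ f (M *ᵥ x) (M *ᵥ Pi.single i 1) = _
  rw [fderiv_apply_eq_dotProduct_partialDeriv hf, dotProduct_mulVec, dotProduct_single_one]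

end PartialDeriv

section Bracket

variable {F G : (Fin 2 → ℝ) → (Fin 2 → ℝ) → ℝ} {q p : Fin 2 → ℝ}

theorem poisson_eq_dotProduct : poisson F G q p =
    (fun i => partialDeriv i (F · p) q) ⬝ᵥ (fun i => partialDeriv i (G q) p) -
      (fun i => partialDeriv i (F q) p) ⬝ᵥ (fun i => partialDeriv i (G · p) q) := by
  simp only [dotProduct, ← Finset.sum_sub_distrib]
  rfl

theorem poisson_comp_mulVec {E N : Matrix (Fin 2) (Fin 2) ℝ} (hNE : N * E = 1)
    (hFq : DifferentiableAt ℝ (F · (N *ᵥ p)) (Eᵀ *ᵥ q))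
    (hFp : DifferentiableAt ℝ (F (Eᵀ *ᵥ q)) (N *ᵥ p))
    (hGq : DifferentiableAt ℝ (G · (N *ᵥ p)) (Eᵀ *ᵥ q))
    (hGp : DifferentiableAt ℝ (G (Eᵀ *ᵥ q)) (N *ᵥ p)) :
    poisson (fun q p => F (Eᵀ *ᵥ q) (N *ᵥ p)) (fun q p => G (Eᵀ *ᵥ q) (N *ᵥ p)) q p =
      poisson F G (Eᵀ *ᵥ q) (N *ᵥ p) := by
  have pairing (x y : Fin 2 → ℝ) : (x ᵥ* Eᵀ) ⬝ᵥ (y ᵥ* N) = x ⬝ᵥ y := by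
    rw [vecMul_transpose, dotProduct_comm, ← dotProduct_mulVec, mulVec_mulVec, hNE, one_mulVec,
      dotProduct_comm]
  simp only [poisson_eq_dotProduct]
  rw [partialDeriv_comp_mulVec (f := (F · (N *ᵥ p))) Eᵀ hFq, partialDeriv_comp_mulVec N hGp,
    partialDeriv_comp_mulVec N hFp, partialDeriv_comp_mulVec (f := (G · (N *ᵥ p))) Eᵀ hGq,
    pairing, dotProduct_comm (_ ᵥ* N), pairing, dotProduct_comm (fun i => partialDeriv i (G · _) _)]

theorem poisson_mul_of_eq_zero {ρ : (Fin 2 → ℝ) → ℝ} (hρ : DifferentiableAt ℝ ρ q)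
    (hGq : DifferentiableAt ℝ (G · p) q) (hG : G q p = 0) :
    poisson F (fun q p => ρ q * G q p) q p = ρ q * poisson F G q p := by
  have hq : (fun i => partialDeriv i (fun q => ρ q * G q p) q) =
      ρ q • fun i => partialDeriv i (G · p) q := by
    ext i
    rw [partialDeriv_eq_fderiv (hρ.fun_mul hGq), fderiv_fun_mul hρ hGq]
    simp [hG, partialDeriv_eq_fderiv hGq]
  have hp : (fun i => partialDeriv i (fun p => ρ q * G q p) p) =
      ρ q • fun i => partialDeriv i (G q) p := by
    ext i
    simp [partialDeriv]
  rw [poisson_eq_dotProduct, poisson_eq_dotProduct, hq, hp, dotProduct_smul, dotProduct_smul,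
    smul_eq_mul, smul_eq_mul, mul_sub]

end Bracket

/-- The function on phase space `ℝ² × ℝ²` of degree at most two in the momenta with the given
coefficient functions. -/
def quadraticInMomenta (A B C f g k : (Fin 2 → ℝ) → ℝ) (q p : Fin 2 → ℝ) : ℝ :=
  A q * p 0 ^ 2 + B q * p 1 ^ 2 + C q * p 0 * p 1 + f q * p 0 + g q * p 1 + k q

section Null

variable {A B C f g k W : (Fin 2 → ℝ) → ℝ} {q : Fin 2 → ℝ}

theorem hasDerivAt_update_partialDeriv (i : Fin 2) (hf : DifferentiableAt ℝ f q) :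
    HasDerivAt (fun t => f (Function.update q i t)) (partialDeriv i f q) (q i) := by
  have hf' : DifferentiableAt ℝ f (Function.update q i (q i)) := by simpa using hf
  exact (hf'.comp (q i) (hasDerivAt_update q i (q i)).differentiableAt).hasDerivAt

theorem partialDeriv_quadraticInMomenta_fst (hA : DifferentiableAt ℝ A q)
    (hB : DifferentiableAt ℝ B q) (hC : DifferentiableAt ℝ C q) (hf : DifferentiableAt ℝ f q)
    (hg : DifferentiableAt ℝ g q) (hk : DifferentiableAt ℝ k q) (i : Fin 2) (p : Fin 2 → ℝ) :
    partialDeriv i (quadraticInMomenta A B C f g k · p) q =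
      quadraticInMomenta (partialDeriv i A) (partialDeriv i B) (partialDeriv i C)
        (partialDeriv i f) (partialDeriv i g) (partialDeriv i k) q p :=
  HasDerivAt.deriv <| ((((((hasDerivAt_update_partialDeriv i hA).mul_const _).add
    ((hasDerivAt_update_partialDeriv i hB).mul_const _)).add
    (((hasDerivAt_update_partialDeriv i hC).mul_const _).mul_const _)).add
    ((hasDerivAt_update_partialDeriv i hf).mul_const _)).add
    ((hasDerivAt_update_partialDeriv i hg).mul_const _)).add (hasDerivAt_update_partialDeriv i hk)

theorem hasDerivAt_quadratic (a b c x : ℝ) :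
    HasDerivAt (fun x => a * x ^ 2 + b * x + c) (2 * a * x + b) x :=
  ((((hasDerivAt_pow 2 x).const_mul a).add ((hasDerivAt_id' x).const_mul b)).add_const
    c).congr_deriv (by norm_num; ring)

theorem partialDeriv_zero_quadraticInMomenta_snd (p : Fin 2 → ℝ) :
    partialDeriv 0 (quadraticInMomenta A B C f g k q) p = 2 * A q * p 0 + C q * p 1 + f q := by
  rw [add_assoc, ← (hasDerivAt_quadratic (A q) (C q * p 1 + f q)
    (B q * p 1 ^ 2 + g q * p 1 + k q) (p 0)).deriv]
  refine congr_arg (deriv · (p 0)) (funext fun t => ?_)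
  simp only [quadraticInMomenta, Function.update_self, Function.update_of_ne one_ne_zero]
  ring

theorem partialDeriv_one_quadraticInMomenta_snd (p : Fin 2 → ℝ) :
    partialDeriv 1 (quadraticInMomenta A B C f g k q) p = 2 * B q * p 1 + C q * p 0 + g q := by
  rw [add_assoc, ← (hasDerivAt_quadratic (B q) (C q * p 0 + g q)
    (A q * p 0 ^ 2 + f q * p 0 + k q) (p 1)).deriv]
  refine congr_arg (deriv · (p 1)) (funext fun t => ?_)
  simp only [quadraticInMomenta, Function.update_self, Function.update_of_ne zero_ne_one]
  ring

theorem poisson_null (F : (Fin 2 → ℝ) → (Fin 2 → ℝ) → ℝ) (p : Fin 2 → ℝ) :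
    poisson F (fun q p => p 0 * p 1 - W q) q p =
      partialDeriv 0 (F · p) q * p 1 + partialDeriv 1 (F · p) q * p 0 +
        partialDeriv 0 (F q) p * partialDeriv 0 W q +
        partialDeriv 1 (F q) p * partialDeriv 1 W q := by
  have hp₀ : partialDeriv 0 (fun p => p 0 * p 1 - W q) p = p 1 := by simp [partialDeriv]
  have hp₁ : partialDeriv 1 (fun p => p 0 * p 1 - W q) p = p 0 := by simp [partialDeriv]
  have hq i : partialDeriv i (fun q => p 0 * p 1 - W q) q = -partialDeriv i W q := by
    simp [partialDeriv]
  simp only [poisson_eq_dotProduct, dotProduct, Fin.sum_univ_two, hp₀, hp₁, hq]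
  ring

theorem coeff_equations_of_poisson_null (hA : DifferentiableAt ℝ A q)
    (hB : DifferentiableAt ℝ B q) (hC : DifferentiableAt ℝ C q) (hf : DifferentiableAt ℝ f q)
    (hg : DifferentiableAt ℝ g q) (hk : DifferentiableAt ℝ k q) (hW : DifferentiableAt ℝ W q)
    (h : ∀ p : Fin 2 → ℝ, p 0 * p 1 = W q →
      poisson (quadraticInMomenta A B C f g k) (fun q p => p 0 * p 1 - W q) q p = 0) :
    partialDeriv 1 A q = 0 ∧ partialDeriv 0 B q = 0 ∧ partialDeriv 1 f q = 0 ∧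
      partialDeriv 0 g q = 0 ∧
      partialDeriv 0 A q * W q + 2 * A q * partialDeriv 0 W q =
        -partialDeriv 1 (fun q => k q + C q * W q) q ∧
      partialDeriv 1 B q * W q + 2 * B q * partialDeriv 1 W q =
        -partialDeriv 0 (fun q => k q + C q * W q) q ∧
      (partialDeriv 0 f q + partialDeriv 1 g q) * W q + f q * partialDeriv 0 W q +
        g q * partialDeriv 1 W q = 0 := by
  have hK i : partialDeriv i (fun q => k q + C q * W q) q =
      partialDeriv i k q + (partialDeriv i C q * W q + C q * partialDeriv i W q) :=
    ((hasDerivAt_update_partialDeriv i hk).fun_add <| by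
      simpa using (hasDerivAt_update_partialDeriv i hC).fun_mul
        (hasDerivAt_update_partialDeriv i hW)).deriv
  obtain ⟨hA₁, hf₁, hξ, hconst, hB₀, hg₀, hη⟩ := cubic_coeffs_eq_zero_of_vanish_on_hyperbola
    (m := W q) (c₃ := partialDeriv 1 A q) (c₂ := partialDeriv 1 f q)
    (c₁ := partialDeriv 0 A q * W q + 2 * A q * partialDeriv 0 W q +
      partialDeriv 1 (fun q => k q + C q * W q) q)
    (c₀ := (partialDeriv 0 f q + partialDeriv 1 g q) * W q + f q * partialDeriv 0 W q +
      g q * partialDeriv 1 W q)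
    (d₃ := partialDeriv 0 B q) (d₂ := partialDeriv 0 g q)
    (d₁ := partialDeriv 1 B q * W q + 2 * B q * partialDeriv 1 W q +
      partialDeriv 0 (fun q => k q + C q * W q) q) fun ξ η hWξη => by
    have := h ![ξ, η] hWξη
    rw [poisson_null, partialDeriv_quadraticInMomenta_fst hA hB hC hf hg hk,
      partialDeriv_quadraticInMomenta_fst hA hB hC hf hg hk,
      partialDeriv_zero_quadraticInMomenta_snd, partialDeriv_one_quadraticInMomenta_snd] at this
    simp only [quadraticInMomenta, cons_val_zero, cons_val_one] at this
    rw [hK, hK, ← hWξη]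
    linear_combination this
  exact ⟨hA₁, hB₀, hf₁, hg₀, eq_neg_of_add_eq_zero_left hξ, eq_neg_of_add_eq_zero_left hη, hconst⟩

end Null

/-- The exponential sum `∑ i, A i * exp (ℓ i 0 * q 0 + ℓ i 1 * q 1)`, the rows of `ℓ` being the
exponents. -/
noncomputable def expPotential (A : Fin 2 → ℝ) (ℓ : Matrix (Fin 2) (Fin 2) ℝ) (q : Fin 2 → ℝ) :
    ℝ :=
  ∑ i, A i * exp ((ℓ *ᵥ q) i)

/-- Two exponents `ℓ 0`, `ℓ 1` in general position with respect to the quadratic form `J`: they are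
linearly independent and not `J`-orthogonal, they have different values under `J`, and none of
`ℓ 0 - ℓ 1`, `ℓ 0 - 2 • ℓ 1`, `ℓ 1 - 2 • ℓ 0` is a null vector of `J`. -/
structure IsNonresonant (J : (Fin 2 → ℝ) → ℝ) (ℓ : Matrix (Fin 2) (Fin 2) ℝ) : Prop where
  det_ne_zero : ℓ.det ≠ 0
  polar_ne_zero : J (ℓ 0 + ℓ 1) ≠ J (ℓ 0) + J (ℓ 1)
  form_ne : J (ℓ 0) ≠ J (ℓ 1)
  sub_ne_zero : J (ℓ 0 - ℓ 1) ≠ 0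
  sub_two_smul_ne_zero : J (ℓ 0 - (2 : ℝ) • ℓ 1) ≠ 0
  two_smul_sub_ne_zero : J (ℓ 1 - (2 : ℝ) • ℓ 0) ≠ 0

theorem IsNonresonant.nonresonantPair_col {ℓ : Matrix (Fin 2) (Fin 2) ℝ}
    (hℓ : IsNonresonant (fun p => p 0 * p 1) ℓ) (j : Fin 2) : NonresonantPair (ℓ · j) := by
  obtain ⟨-, -, -, h₁, h₂, h₃⟩ := hℓ
  simp only [Pi.sub_apply, Pi.smul_apply, smul_eq_mul, mul_ne_zero_iff, _root_.sub_ne_zero]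
    at h₁ h₂ h₃
  fin_cases j
  exacts [⟨h₁.1, h₂.1, h₃.1⟩, ⟨h₁.2, h₂.2, h₃.2⟩]

theorem isNonresonant_of_gram {J : (Fin 2 → ℝ) → ℝ} {ℓ : Matrix (Fin 2) (Fin 2) ℝ} {x y z : ℝ}
    (hJ : ∀ s t : ℝ, J (s • ℓ 0 + t • ℓ 1) = s ^ 2 * x + 2 * s * t * y + t ^ 2 * z)
    (hdet : ℓ.det ≠ 0) (hy : y ≠ 0) (hxz : x ≠ z) (h_sub : x - 2 * y + z ≠ 0)
    (h_sub_two : x - 4 * y + 4 * z ≠ 0) (h_two_sub : 4 * x - 4 * y + z ≠ 0) :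
    IsNonresonant J ℓ := by
  have hJ₀ : J (ℓ 0) = x := by simpa using hJ 1 0
  have hJ₁ : J (ℓ 1) = z := by simpa using hJ 0 1
  have hJ_add : J (ℓ 0 + ℓ 1) = x + 2 * y + z := by simpa using hJ 1 1
  have hJ_sub : J (ℓ 0 - ℓ 1) = x - 2 * y + z := by
    simpa [← sub_eq_add_neg] using hJ 1 (-1)
  have hJ_sub_two : J (ℓ 0 - (2 : ℝ) • ℓ 1) = x - 4 * y + 4 * z := by
    rw [sub_eq_add_neg, ← neg_smul, ← one_smul ℝ (ℓ 0), hJ]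
    ring
  have hJ_two_sub : J (ℓ 1 - (2 : ℝ) • ℓ 0) = 4 * x - 4 * y + z := by
    rw [sub_eq_neg_add, ← neg_smul, ← one_smul ℝ (ℓ 1), hJ]
    ring
  refine ⟨hdet, fun h => hy ?_, hJ₀ ▸ hJ₁ ▸ hxz, hJ_sub ▸ h_sub, hJ_sub_two ▸ h_sub_two,
    hJ_two_sub ▸ h_two_sub⟩
  rw [hJ_add, hJ₀, hJ₁] at h
  linarith

section ExpPotential

variable {A : Fin 2 → ℝ} {ℓ : Matrix (Fin 2) (Fin 2) ℝ}

theorem contDiff_expPotential {n : WithTop ℕ∞} : ContDiff ℝ n (expPotential A ℓ) := by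
  unfold expPotential
  simp only [mulVec, dotProduct]
  fun_prop

theorem expPotential_comp_mulVec (M : Matrix (Fin 2) (Fin 2) ℝ) (q : Fin 2 → ℝ) :
    expPotential A ℓ (M *ᵥ q) = expPotential A (ℓ * M) q := by
  simp only [expPotential, mulVec_mulVec]

theorem expPotential_vec (u w : ℝ) :
    expPotential A ℓ ![u, w] = ∑ i, A i * exp (ℓ i 0 * u) * exp (ℓ i 1 * w) := by
  simp [expPotential, mulVec_eq_sum, exp_add, mul_assoc, mul_comm]

theorem partialDeriv_expPotential (j : Fin 2) (q : Fin 2 → ℝ) :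
    partialDeriv j (expPotential A ℓ) q = expPotential (fun i => A i * ℓ i j) ℓ q := by
  have h i : HasDerivAt (fun t => A i * exp ((ℓ *ᵥ Function.update q j t) i))
      (A i * ℓ i j * exp ((ℓ *ᵥ q) i)) (q j) := by
    have hlin := ℓ.mulVecLin.toContinuousLinearMap.hasFDerivAt.comp_hasDerivAt (q j)
      (hasDerivAt_update q j (q j))
    refine ((hasDerivAt_pi.1 hlin i).exp.const_mul (A i)).congr_deriv ?_
    simp [mul_assoc, mul_comm]
  exact (HasDerivAt.fun_sum fun i _ => h i).deriv

end ExpPotential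

theorem eq_vec_two {X : Type*} (x : Fin 2 → X) : x = ![x 0, x 1] :=
  (FinVec.etaExpand_eq x).symm

section NullSolution

variable {f g : (Fin 2 → ℝ) → ℝ} {α : Fin 2 → ℝ} {ℓ : Matrix (Fin 2) (Fin 2) ℝ}

theorem eq_apply_zero_of_partialDeriv_one_eq_zero (hf : Differentiable ℝ f)
    (h : ∀ q, partialDeriv 1 f q = 0) (u w : ℝ) : f ![u, w] = f ![u, 0] :=
  is_const_of_deriv_eq_zero (fun w => (hasDerivAt_partialDeriv_one hf u w).differentiableAt)
    (fun w => (hasDerivAt_partialDeriv_one hf u w).deriv.trans (h _)) w 0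

theorem eq_apply_zero_of_partialDeriv_zero_eq_zero (hf : Differentiable ℝ f)
    (h : ∀ q, partialDeriv 0 f q = 0) (u w : ℝ) : f ![u, w] = f ![0, w] :=
  is_const_of_deriv_eq_zero (fun u => (hasDerivAt_partialDeriv_zero hf u w).differentiableAt)
    (fun u => (hasDerivAt_partialDeriv_zero hf u w).deriv.trans (h _)) u 0

theorem partialDeriv_zero_eq_apply_zero (hf : Differentiable ℝ f)
    (h : ∀ q, partialDeriv 1 f q = 0) (u w : ℝ) :
    partialDeriv 0 f ![u, w] = partialDeriv 0 f ![u, 0] := by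
  refine (hasDerivAt_partialDeriv_zero hf u w).unique ?_
  simpa only [eq_apply_zero_of_partialDeriv_one_eq_zero hf h _ w] using
    hasDerivAt_partialDeriv_zero hf u 0

theorem partialDeriv_one_eq_apply_zero (hf : Differentiable ℝ f)
    (h : ∀ q, partialDeriv 0 f q = 0) (u w : ℝ) :
    partialDeriv 1 f ![u, w] = partialDeriv 1 f ![0, w] := by
  refine (hasDerivAt_partialDeriv_one hf u w).unique ?_
  simpa only [eq_apply_zero_of_partialDeriv_zero_eq_zero hf h u] using
    hasDerivAt_partialDeriv_one hf 0 w

theorem IsNonresonant.minors_ne (hℓ : IsNonresonant (fun p => p 0 * p 1) ℓ) :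
    ℓ 0 0 * ℓ 1 1 ≠ ℓ 1 0 * ℓ 0 1 := by
  simpa [det_fin_two, sub_eq_zero, mul_comm] using hℓ.det_ne_zero

theorem eq_zero_of_null_first_order (hα : ∀ i, α i ≠ 0)
    (hℓ : IsNonresonant (fun p => p 0 * p 1) ℓ) (hf : Differentiable ℝ f)
    (hg : Differentiable ℝ g) (hf₁ : ∀ q, partialDeriv 1 f q = 0)
    (hg₀ : ∀ q, partialDeriv 0 g q = 0)
    (h : ∀ q, (partialDeriv 0 f q + partialDeriv 1 g q) * expPotential α ℓ q +
      f q * partialDeriv 0 (expPotential α ℓ) q + g q * partialDeriv 1 (expPotential α ℓ) q = 0) :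
    f = 0 ∧ g = 0 := by
  have hfu := eq_apply_zero_of_partialDeriv_one_eq_zero hf hf₁
  have hgw := eq_apply_zero_of_partialDeriv_zero_eq_zero hg hg₀
  obtain ⟨hf0, hg0⟩ := eq_zero_of_separated_first_order (hℓ.nonresonantPair_col 0)
    (hℓ.nonresonantPair_col 1) hα hℓ.minors_ne (fun u => hasDerivAt_partialDeriv_zero hf u 0)
    (fun w => hasDerivAt_partialDeriv_one hg 0 w) fun u w => by
      refine Eq.trans ?_ (h ![u, w])
      rw [partialDeriv_expPotential, partialDeriv_expPotential, expPotential_vec,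
        expPotential_vec, expPotential_vec, partialDeriv_zero_eq_apply_zero hf hf₁ u w,
        partialDeriv_one_eq_apply_zero hg hg₀ u w, hfu u w, hgw u w]
      simp only [Fin.sum_univ_two]
      ring
  constructor <;> ext q
  · rw [eq_vec_two q, hfu, hf0, Pi.zero_apply]
  · rw [eq_vec_two q, hgw, hg0, Pi.zero_apply]

theorem eq_zero_of_null_second_order (hα : ∀ i, α i ≠ 0)
    (hℓ : IsNonresonant (fun p => p 0 * p 1) ℓ) {A B K : (Fin 2 → ℝ) → ℝ}
    (hA : Differentiable ℝ A) (hB : Differentiable ℝ B) (hK : Differentiable ℝ K)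
    (hA₁ : ∀ q, partialDeriv 1 A q = 0) (hB₀ : ∀ q, partialDeriv 0 B q = 0)
    (hK₁ : ∀ q, partialDeriv 0 A q * expPotential α ℓ q +
      2 * A q * partialDeriv 0 (expPotential α ℓ) q = -partialDeriv 1 K q)
    (hK₀ : ∀ q, partialDeriv 1 B q * expPotential α ℓ q +
      2 * B q * partialDeriv 1 (expPotential α ℓ) q = -partialDeriv 0 K q) :
    A = 0 ∧ B = 0 ∧ ∃ c, ∀ q, K q = c := by
  have hAu := eq_apply_zero_of_partialDeriv_one_eq_zero hA hA₁
  have hBw := eq_apply_zero_of_partialDeriv_zero_eq_zero hB hB₀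
  have hperm : ℓ 0 0 * ℓ 1 1 + ℓ 1 0 * ℓ 0 1 ≠ 0 := fun h0 => hℓ.polar_ne_zero <| by
    simp only [Pi.add_apply]
    linear_combination h0
  obtain ⟨hA0, hB0⟩ := eq_zero_of_separated_second_order (hℓ.nonresonantPair_col 0)
    (hℓ.nonresonantPair_col 1) hα hℓ.minors_ne hperm hℓ.form_ne
    (f := fun u w => -K ![u, w])
    (fun u => hasDerivAt_partialDeriv_zero hA u 0) (fun w => hasDerivAt_partialDeriv_one hB 0 w)
    (fun u w => (hasDerivAt_partialDeriv_one hK u w).fun_neg.congr_deriv <| by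
      rw [← hK₁, partialDeriv_expPotential, expPotential_vec, expPotential_vec,
        partialDeriv_zero_eq_apply_zero hA hA₁ u w, hAu u w]
      simp only [Fin.sum_univ_two]
      ring)
    (fun u w => (hasDerivAt_partialDeriv_zero hK u w).fun_neg.congr_deriv <| by
      rw [← hK₀, partialDeriv_expPotential, expPotential_vec, expPotential_vec,
        partialDeriv_one_eq_apply_zero hB hB₀ u w, hBw u w]
      simp only [Fin.sum_univ_two]
      ring)
  obtain rfl : A = 0 := funext fun q => by rw [eq_vec_two q, hAu, hA0, Pi.zero_apply]
  obtain rfl : B = 0 := funext fun q => by rw [eq_vec_two q, hBw, hB0, Pi.zero_apply]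
  refine ⟨rfl, rfl, K ![0, 0], fun q => ?_⟩
  have hK₁' q : partialDeriv 1 K q = 0 := by simpa [partialDeriv] using hK₁ q
  have hK₀' q : partialDeriv 0 K q = 0 := by simpa [partialDeriv] using hK₀ q
  rw [eq_vec_two q, eq_apply_zero_of_partialDeriv_one_eq_zero hK hK₁',
    eq_apply_zero_of_partialDeriv_zero_eq_zero hK hK₀']

theorem quadraticInMomenta_eq_of_poisson_null {A B C k : (Fin 2 → ℝ) → ℝ}
    (hA : Differentiable ℝ A) (hB : Differentiable ℝ B) (hC : Differentiable ℝ C)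
    (hf : Differentiable ℝ f) (hg : Differentiable ℝ g) (hk : Differentiable ℝ k)
    (hα : ∀ i, α i ≠ 0) (hℓ : IsNonresonant (fun p => p 0 * p 1) ℓ)
    (h : ∀ q p : Fin 2 → ℝ, p 0 * p 1 = expPotential α ℓ q →
      poisson (quadraticInMomenta A B C f g k) (fun q p => p 0 * p 1 - expPotential α ℓ q) q p =
        0) :
    ∃ c, ∀ q p, quadraticInMomenta A B C f g k q p =
      C q * (p 0 * p 1 - expPotential α ℓ q) + c := by
  have hW : Differentiable ℝ (expPotential α ℓ) :=
    (contDiff_expPotential (n := 1)).differentiable one_ne_zero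
  choose hA₁ hB₀ hf₁ hg₀ hK₁ hK₀ heqfg using fun q =>
    coeff_equations_of_poisson_null (hA q) (hB q) (hC q) (hf q) (hg q) (hk q) (hW q) (h q)
  obtain ⟨rfl, rfl⟩ := eq_zero_of_null_first_order hα hℓ hf hg hf₁ hg₀ heqfg
  obtain ⟨rfl, rfl, c, hc⟩ := eq_zero_of_null_second_order hα hℓ hA hB
    (hk.fun_add (hC.fun_mul hW)) hA₁ hB₀ hK₁ hK₀
  refine ⟨c, fun q p => ?_⟩
  rw [← hc q]
  simp only [quadraticInMomenta, Pi.zero_apply]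
  ring

end NullSolution

/-- A function on phase space of degree at most two in the momenta whose coefficient functions are
differentiable. -/
def IsQuadraticInMomenta (F : (Fin 2 → ℝ) → (Fin 2 → ℝ) → ℝ) : Prop :=
  ∃ A B C f g k : (Fin 2 → ℝ) → ℝ,
    (Differentiable ℝ A ∧ Differentiable ℝ B ∧ Differentiable ℝ C) ∧
    (Differentiable ℝ f ∧ Differentiable ℝ g ∧ Differentiable ℝ k) ∧
    F = quadraticInMomenta A B C f g k

section LinearChange

variable {F : (Fin 2 → ℝ) → (Fin 2 → ℝ) → ℝ} {J : (Fin 2 → ℝ) → ℝ}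
  {E N ℓ : Matrix (Fin 2) (Fin 2) ℝ}

theorem IsQuadraticInMomenta.comp_mulVec (hF : IsQuadraticInMomenta F)
    (M N : Matrix (Fin 2) (Fin 2) ℝ) :
    IsQuadraticInMomenta fun q p => F (M *ᵥ q) (N *ᵥ p) := by
  obtain ⟨A, B, C, f, g, k, ⟨hA, hB, hC⟩, ⟨hf, hg, hk⟩, rfl⟩ := hF
  have hM : Differentiable ℝ (M *ᵥ ·) := M.mulVecLin.toContinuousLinearMap.differentiable
  refine ⟨fun q => A (M *ᵥ q) * N 0 0 ^ 2 + B (M *ᵥ q) * N 1 0 ^ 2 +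
      C (M *ᵥ q) * (N 0 0 * N 1 0),
    fun q => A (M *ᵥ q) * N 0 1 ^ 2 + B (M *ᵥ q) * N 1 1 ^ 2 + C (M *ᵥ q) * (N 0 1 * N 1 1),
    fun q => A (M *ᵥ q) * (2 * N 0 0 * N 0 1) + B (M *ᵥ q) * (2 * N 1 0 * N 1 1) +
      C (M *ᵥ q) * (N 0 0 * N 1 1 + N 0 1 * N 1 0),
    fun q => f (M *ᵥ q) * N 0 0 + g (M *ᵥ q) * N 1 0,
    fun q => f (M *ᵥ q) * N 0 1 + g (M *ᵥ q) * N 1 1,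
    fun q => k (M *ᵥ q), ⟨?_, ?_, ?_⟩, ⟨?_, ?_, hk.comp hM⟩, ?_⟩
  iterate 5 fun_prop
  ext q p
  simp only [quadraticInMomenta, mulVec, dotProduct, Fin.sum_univ_two]
  ring

theorem IsQuadraticInMomenta.differentiable_fst (hF : IsQuadraticInMomenta F) (p : Fin 2 → ℝ) :
    Differentiable ℝ (F · p) := by
  obtain ⟨A, B, C, f, g, k, ⟨hA, hB, hC⟩, ⟨hf, hg, hk⟩, rfl⟩ := hF
  unfold quadraticInMomenta
  fun_prop

theorem IsQuadraticInMomenta.differentiable_snd (hF : IsQuadraticInMomenta F) (q : Fin 2 → ℝ) :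
    Differentiable ℝ (F q) := by
  obtain ⟨A, B, C, f, g, k, -, -, rfl⟩ := hF
  unfold quadraticInMomenta
  fun_prop

theorem IsNonresonant.mul_transpose (hE : E.det ≠ 0)
    (hℓ : IsNonresonant (fun p => J (E *ᵥ p)) ℓ) : IsNonresonant J (ℓ * Eᵀ) := by
  have hrow i : (ℓ * Eᵀ) i = E *ᵥ ℓ i := by rw [mul_apply_eq_vecMul, vecMul_transpose]
  obtain ⟨hdet, hpolar, hne, h₁, h₂, h₃⟩ := hℓ
  constructor
  · rw [det_mul, det_transpose]
    exact mul_ne_zero hdet hE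
  all_goals simpa only [hrow, ← mulVec_add, ← mulVec_sub, ← mulVec_smul]

theorem exists_null_coordinates {x y z : ℝ} (hdisc : 0 < y ^ 2 - x * z) :
    ∃ E : Matrix (Fin 2) (Fin 2) ℝ, E.det ≠ 0 ∧ ∀ p : Fin 2 → ℝ,
      x * p 0 ^ 2 + 2 * y * p 0 * p 1 + z * p 1 ^ 2 = (E *ᵥ p) 0 * (E *ᵥ p) 1 := by
  rcases eq_or_ne z 0 with rfl | hz
  · have hy : y ≠ 0 := fun hy => by simp [hy] at hdisc
    refine ⟨!![1, 0; x, 2 * y], by simpa [det_fin_two], fun p => ?_⟩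
    simp only [mulVec, dotProduct, Fin.sum_univ_two, of_apply, cons_val_zero, cons_val_one]
    ring
  · have hδ := Real.sqrt_pos.2 hdisc
    have hδ_sq := Real.sq_sqrt hdisc.le
    set δ := √(y ^ 2 - x * z)
    refine ⟨!![y + δ, z; (y - δ) / z, 1], ?_, fun p => ?_⟩
    · rw [det_fin_two_of, mul_div_cancel₀ _ hz]
      linarith
    · simp only [mulVec, dotProduct, Fin.sum_univ_two, of_apply, cons_val_zero, cons_val_one]
      field_simp
      linear_combination p 0 ^ 2 * hδ_sq

theorem IsQuadraticInMomenta.eq_mul_add_const (hF : IsQuadraticInMomenta F) {α : Fin 2 → ℝ}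
    (hα : ∀ i, α i ≠ 0) (hE : E.det ≠ 0) (hJ : ∀ p, J p = (E *ᵥ p) 0 * (E *ᵥ p) 1)
    (hℓ : IsNonresonant J ℓ)
    (h : ∀ q p, J p = expPotential α ℓ q →
      poisson F (fun q p => J p - expPotential α ℓ q) q p = 0) :
    ∃ (φ : (Fin 2 → ℝ) → ℝ) (c : ℝ), ∀ q p, F q p = φ q * (J p - expPotential α ℓ q) + c := by
  have hNE : E⁻¹ * E = 1 := nonsing_inv_mul E (isUnit_iff_ne_zero.2 hE)
  have hEN : E * E⁻¹ = 1 := mul_nonsing_inv E (isUnit_iff_ne_zero.2 hE)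
  have hJN p : J (E⁻¹ *ᵥ p) = p 0 * p 1 := by rw [hJ, mulVec_mulVec, hEN, one_mulVec]
  have hG q p : J (E⁻¹ *ᵥ p) - expPotential α ℓ (Eᵀ *ᵥ q) =
      p 0 * p 1 - expPotential α (ℓ * Eᵀ) q := by rw [hJN, expPotential_comp_mulVec]
  obtain rfl : J = fun p => (E *ᵥ p) 0 * (E *ᵥ p) 1 := funext hJ
  have hW := (contDiff_expPotential (A := α) (ℓ := ℓ) (n := 1)).differentiable one_ne_zero
  obtain ⟨A, B, C, f, g, k, ⟨hA, hB, hC⟩, ⟨hf, hg, hk⟩, hF'⟩ := hF.comp_mulVec Eᵀ E⁻¹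
  obtain ⟨c, hc⟩ := quadraticInMomenta_eq_of_poisson_null hA hB hC hf hg hk hα
    (hℓ.mul_transpose hE (J := fun p => p 0 * p 1)) fun q p hqp => by
      rw [← hF']
      simp only [← hG]
      rw [poisson_comp_mulVec (G := fun q p => (E *ᵥ p) 0 * (E *ᵥ p) 1 - expPotential α ℓ q) hNE
        (hF.differentiable_fst _ _) (hF.differentiable_snd _ _) (by fun_prop)
        (by simp only [mulVec, dotProduct]; fun_prop)]
      exact h _ _ ((hJN p).trans (hqp.trans (expPotential_comp_mulVec _ _).symm))
  refine ⟨fun q => C ((E⁻¹)ᵀ *ᵥ q), c, fun q p => ?_⟩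
  have := hc ((E⁻¹)ᵀ *ᵥ q) (E *ᵥ p)
  rw [← hF', ← expPotential_comp_mulVec] at this
  simpa only [mulVec_mulVec, ← transpose_mul, hNE, transpose_one, one_mulVec] using this

end LinearChange

section Hamiltonian

variable {d1 d2 : ℕ} {α : Fin 2 → ℝ} {σ : Matrix (Fin 2) (Fin 2) ℝ}
  {F : (Fin 2 → ℝ) → (Fin 2 → ℝ) → ℝ}

theorem contDiff_vol {n : WithTop ℕ∞} : ContDiff ℝ n (vol d1 d2) := by
  unfold vol
  fun_prop

theorem Ham_expPotential (q p : Fin 2 → ℝ) :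
    Ham d1 d2 (expPotential α σ) q p = (vol d1 d2 q)⁻¹ *
      (Jform d1 d2 p - expPotential α (σ + of fun _ => ![(d1 : ℝ), d2]) q) := by
  have hW : expPotential α (σ + of fun _ => ![(d1 : ℝ), d2]) q =
      vol d1 d2 q ^ 2 * expPotential α σ q := by
    simp only [expPotential, vol, Finset.mul_sum, ← exp_nat_mul, add_mulVec, Pi.add_apply, exp_add]
    refine Finset.sum_congr rfl fun i _ => ?_
    have : ((of fun _ => ![(d1 : ℝ), d2]) *ᵥ q) i = (2 : ℕ) * ((d1 * q 0 + d2 * q 1) / 2) := by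
      simp only [mulVec, dotProduct, Fin.sum_univ_two, of_apply, cons_val_zero, cons_val_one]
      ring
    rw [this]
    ring
  have hv : vol d1 d2 q ≠ 0 := (exp_pos _).ne'
  rw [hW, Ham]
  field_simp

theorem exists_null_coordinates_Jform (hd1 : 0 < d1) (hd2 : 0 < d2) :
    ∃ E : Matrix (Fin 2) (Fin 2) ℝ, E.det ≠ 0 ∧
      ∀ p, Jform d1 d2 p = (E *ᵥ p) 0 * (E *ᵥ p) 1 := by
  have h1 : (1 : ℝ) ≤ d1 := by exact_mod_cast hd1
  have h2 : (1 : ℝ) ≤ d2 := by exact_mod_cast hd2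
  have hn : (0 : ℝ) < d1 + d2 - 1 := by linarith
  have hdisc : 0 < (1 / (d1 + d2 - 1) : ℝ) ^ 2 -
      (1 / (d1 + d2 - 1) - 1 / d1) * (1 / (d1 + d2 - 1) - 1 / d2) :=
    calc (0 : ℝ) < 1 / (d1 * d2 * (d1 + d2 - 1)) := by positivity
      _ = _ := by field_simp; ring
  obtain ⟨E, hE, hJ⟩ := exists_null_coordinates hdisc
  refine ⟨E, hE, fun p => ?_⟩
  rw [← hJ, Jform]
  ring

theorem quadraticInMomenta_eq_of_poisson_Ham (hd1 : 0 < d1) (hd2 : 0 < d2)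
    {A B C f g k : (Fin 2 → ℝ) → ℝ}
    (hA : Differentiable ℝ A) (hB : Differentiable ℝ B) (hC : Differentiable ℝ C)
    (hf : Differentiable ℝ f) (hg : Differentiable ℝ g) (hk : Differentiable ℝ k)
    (hα : ∀ i, α i ≠ 0)
    (hσ : IsNonresonant (Jform d1 d2) (σ + of fun _ => ![(d1 : ℝ), d2]))
    (h : ∀ q p, Ham d1 d2 (expPotential α σ) q p = 0 →
      poisson (quadraticInMomenta A B C f g k) (Ham d1 d2 (expPotential α σ)) q p = 0) :
    ∃ c, ∀ q p, quadraticInMomenta A B C f g k q p =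
      (d1 + d2 - 1) / 2 * vol d1 d2 q * C q * Ham d1 d2 (expPotential α σ) q p + c := by
  have hv q : vol d1 d2 q ≠ 0 := (exp_pos _).ne'
  have hn : (d1 + d2 - 1 : ℝ) ≠ 0 := by
    have : 1 < d1 + d2 := by lia
    exact sub_ne_zero.2 (by exact_mod_cast this.ne')
  obtain ⟨E, hE, hJ⟩ := exists_null_coordinates_Jform hd1 hd2
  have hW := (contDiff_expPotential (A := α) (ℓ := σ + of fun _ => ![(d1 : ℝ), d2])
    (n := 1)).differentiable one_ne_zero
  have hF : IsQuadraticInMomenta (quadraticInMomenta A B C f g k) :=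
    ⟨A, B, C, f, g, k, ⟨hA, hB, hC⟩, ⟨hf, hg, hk⟩, rfl⟩
  obtain ⟨φ, c, hφ⟩ := hF.eq_mul_add_const hα hE hJ hσ fun q p hqp => by
    have hρ : DifferentiableAt ℝ (fun q => (vol d1 d2 q)⁻¹) q :=
      ((contDiff_vol (n := 1)).differentiable one_ne_zero q).inv (hv q)
    have hpoisson := h q p (by rw [Ham_expPotential, hqp, sub_self, mul_zero])
    rw [funext₂ (Ham_expPotential (d1 := d1) (d2 := d2) (α := α) (σ := σ)),
      poisson_mul_of_eq_zero hρ (by fun_prop) (sub_eq_zero.2 hqp)] at hpoisson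
    exact (mul_eq_zero.1 hpoisson).resolve_left (inv_ne_zero (hv q))
  have hφC q : φ q = (d1 + d2 - 1) / 2 * C q := by
    have h₁₁ := hφ q ![1, 1]
    have h₁₀ := hφ q ![1, 0]
    have h₀₁ := hφ q ![0, 1]
    have h₀₀ := hφ q ![0, 0]
    simp only [quadraticInMomenta, Jform, cons_val_zero, cons_val_one] at h₁₁ h₁₀ h₀₁ h₀₀
    have : C q = φ q * (2 / (d1 + d2 - 1)) := by linear_combination h₁₁ - h₁₀ - h₀₁ + h₀₀
    rw [this]
    field_simp
  refine ⟨c, fun q p => ?_⟩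
  rw [hφ, hφC, Ham_expPotential]
  field_simp [hv q]

end Hamiltonian

theorem Jform_case_ii_exponents {d1 d2 : ℕ} (hd1 : 0 < d1) (hd2 : 0 < d2) (s t : ℝ) :
    Jform d1 d2 (s • ![(d1 : ℝ), d2 - 1] + t • ![(d1 : ℝ) + 1, d2 - 2]) =
      s ^ 2 * (1 - 1 / d2) + 2 * s * t * (1 - 2 / d2) + t ^ 2 * (1 - 1 / d1 - 4 / d2) := by
  have hx : (0 : ℝ) < d1 := by exact_mod_cast hd1
  have hy : (1 : ℝ) ≤ d2 := by exact_mod_cast hd2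
  have hn : (0 : ℝ) < d1 + d2 - 1 := by linarith
  simp only [Jform, Pi.add_apply, Pi.smul_apply, smul_eq_mul, cons_val_zero, cons_val_one]
  field_simp
  ring

theorem isNonresonant_case_ii {d1 d2 : ℕ} (hd1pos : 0 < d1) (hd2pos : 0 < d2) (hd1 : d1 ≠ 1)
    (hd2 : d2 ≠ 2) (hne : 9 * (d1 : ℝ) ≠ d2 * (d1 - 4)) :
    IsNonresonant (Jform d1 d2) !![(d1 : ℝ), d2 - 1; d1 + 1, d2 - 2] := by
  have hx : (0 : ℝ) < d1 := by exact_mod_cast hd1pos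
  have hy : (1 : ℝ) ≤ d2 := by exact_mod_cast hd2pos
  have hx_ne : (d1 : ℝ) - 1 ≠ 0 := sub_ne_zero.2 (by exact_mod_cast hd1)
  have hy_ne : (d2 : ℝ) - 2 ≠ 0 := sub_ne_zero.2 (by exact_mod_cast hd2)
  refine isNonresonant_of_gram (Jform_case_ii_exponents hd1pos hd2pos) ?_ ?_ ?_ ?_ ?_ ?_
  · rw [det_fin_two_of]
    linarith
  · rw [one_sub_div (by positivity)]
    positivity
  · refine sub_ne_zero.1 (ne_of_eq_of_ne (b := 1 / (d1 : ℝ) + 3 / d2) ?_ (by positivity))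
    ring
  · refine ne_of_eq_of_ne (b := -(1 / (d1 : ℝ) + 1 / d2)) ?_ (neg_ne_zero.2 (by positivity))
    ring
  · refine ne_of_eq_of_ne (b := (d2 * (d1 - 4) - 9 * d1) / (d1 * d2 : ℝ)) ?_
      (div_ne_zero (sub_ne_zero.2 hne.symm) (by positivity))
    field_simp
    ring
  · refine ne_of_eq_of_ne (b := ((d1 : ℝ) - 1) / d1) ?_ (by positivity)
    field_simp
    ring

theorem quadratic_first_integral_trivial_case_ii_general
    {d1 d2 : ℕ} (hd1pos : 0 < d1) (hd2pos : 0 < d2) (hd1 : d1 ≠ 1) (hd2 : d2 ≠ 2)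
    (hne : 9 * (d1 : ℝ) ≠ d2 * (d1 - 4)) {A1 A2 : ℝ} (hA1 : A1 ≠ 0) (hA2 : A2 ≠ 0)
    {S : (Fin 2 → ℝ) → ℝ} (hS : S = fun q => A1 * exp (-(q 1)) - A2 * exp (q 0 - 2 * q 1))
    {F20 F02 F11 F1 F2 F0 : (Fin 2 → ℝ) → ℝ}
    (hF20 : Differentiable ℝ F20) (hF02 : Differentiable ℝ F02) (hF11 : Differentiable ℝ F11)
    (hF1 : Differentiable ℝ F1) (hF2 : Differentiable ℝ F2) (hF0 : Differentiable ℝ F0)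
    (h : ∀ q p, Ham d1 d2 S q p = 0 →
      poisson (quadraticInMomenta F20 F02 F11 F1 F2 F0) (Ham d1 d2 S) q p = 0) :
    ∃ c, ∀ q p, quadraticInMomenta F20 F02 F11 F1 F2 F0 q p =
      (d1 + d2 - 1) / 2 * vol d1 d2 q * F11 q * Ham d1 d2 S q p + c := by
  obtain rfl : S = expPotential ![A1, -A2] !![0, -1; 1, -2] := by
    rw [hS]
    ext q
    simp [expPotential, mulVec, dotProduct, sub_eq_add_neg]
  have hℓ : !![(d1 : ℝ), d2 - 1; d1 + 1, d2 - 2] =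
      !![0, -1; 1, -2] + of fun _ => ![(d1 : ℝ), d2] := by
    ext i j
    fin_cases i <;> fin_cases j <;> simp [sub_eq_add_neg, add_comm]
  exact quadraticInMomenta_eq_of_poisson_Ham hd1pos hd2pos hF20 hF02 hF11 hF1 hF2 hF0
    (by simp [Fin.forall_fin_two, hA1, hA2])
    (hℓ ▸ isNonresonant_case_ii hd1pos hd2pos hd1 hd2 hne) h

end Development

/-- Dancer–Wang: for `S(q) = A₁e^{−q₂} − A₂e^{q₁−2q₂}` with `d₁ ≠ 1`, `d₂ ≠ 2` and
`9d₁ ≠ d₂(d₁−4)`, every quadratic-in-momenta first integral on `V_H` is trivial. -/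
theorem quadratic_first_integral_trivial_case_ii
    (d1 d2 : ℕ) (hd1pos : 0 < d1) (hd2pos : 0 < d2)
    (hd1 : d1 ≠ 1) (hd2 : d2 ≠ 2)
    (A1 A2 : ℝ) (hA1 : 0 < A1) (hA2 : 0 < A2)
    (hne : 9 * (d1 : ℝ) ≠ (d2 : ℝ) * ((d1 : ℝ) - 4))
    (S : (Fin 2 → ℝ) → ℝ)
    (hS : S = fun q => A1 * Real.exp (-(q 1)) - A2 * Real.exp (q 0 - 2 * q 1))
    (F20 F02 F11 F1 F2 F0 : (Fin 2 → ℝ) → ℝ)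
    (hF20 : ContDiff ℝ 1 F20) (hF02 : ContDiff ℝ 1 F02) (hF11 : ContDiff ℝ 1 F11)
    (hF1 : ContDiff ℝ 1 F1) (hF2 : ContDiff ℝ 1 F2) (hF0 : ContDiff ℝ 1 F0)
    (F : (Fin 2 → ℝ) → (Fin 2 → ℝ) → ℝ)
    (hF : F = fun q p => F20 q * (p 0) ^ 2 + F02 q * (p 1) ^ 2 + F11 q * (p 0) * (p 1) +
      F1 q * p 0 + F2 q * p 1 + F0 q)
    (hbracket : ∀ q p : Fin 2 → ℝ, Ham d1 d2 S q p = 0 → poisson F (Ham d1 d2 S) q p = 0) :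
    ∃ (φ : (Fin 2 → ℝ) → ℝ) (c : ℝ), ContDiff ℝ 1 φ ∧
      ∀ q p : Fin 2 → ℝ, F q p = φ q * Ham d1 d2 S q p + c := by
  obtain rfl : F = quadraticInMomenta F20 F02 F11 F1 F2 F0 := hF
  obtain ⟨c, hc⟩ := quadratic_first_integral_trivial_case_ii_general hd1pos hd2pos hd1 hd2 hne
    hA1.ne' hA2.ne' hS (hF20.differentiable one_ne_zero) (hF02.differentiable one_ne_zero)
    (hF11.differentiable one_ne_zero) (hF1.differentiable one_ne_zero)
    (hF2.differentiable one_ne_zero) (hF0.differentiable one_ne_zero) hbracket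
  exact ⟨fun q => (d1 + d2 - 1) / 2 * vol d1 d2 q * F11 q, c,
    (contDiff_const.mul contDiff_vol).mul hF11, hc⟩
end

section
/- Let d_1 ≤ d_2 be positive integers, let A_1, A_2 > 0, let S(q) = A_1 e^{−q_1} + A_2 e^{−q_2}, and let H be the associated Ricci-flat cohomogeneity one Hamiltonian on ℝ²×ℝ². Then there exist C¹ functions F_1, F_2, F_0 on ℝ², with F_1 and F_2 not both identically zero, such that F(q,p) := F_1(q)p_1 + F_2(q)p_2 + F_0(q) satisfies {F,H} = 0 at every point of V_H, if and only if d_1 = d_2 = 5. -/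
/-!
Write `U = v²S`, so that `H = v⁻¹(J - U)`. On `V_H` the bracket `{F, H}` equals `v⁻¹{F, J - U}`, and
`V_H` is the level set `J = U`. The form `J` is a product `(L ⬝ᵥ p)(M ⬝ᵥ p)` of two linear forms, so
in the momentum coordinates `s = L ⬝ᵥ p`, `t = M ⬝ᵥ p` the fibre of `V_H` over `q` is the hyperbola
`st = U(q)`, on which the monomials `s², t², s, t, 1` are independent. Hence `f s + g t + F₀` is a
first integral on `V_H` iff `F₀` is constant, `f` is constant along `M`, `g` is constant along `L`,
and `f L + g M` satisfies a conformal equation with respect to `U`.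

For the given `S` one has `U = A₁ exp(w₁ ⬝ᵥ q) + A₂ exp(w₂ ⬝ᵥ q)`. In null coordinates
`q = xL + yM` the conformal equation separates, and it has a nontrivial solution only if the
exponents `aᵢ = wᵢ ⬝ᵥ L`, `bᵢ = wᵢ ⬝ᵥ M` satisfy `a₁ = 2a₂, b₂ = 2b₁` or `a₂ = 2a₁, b₁ = 2b₂`.
Evaluating `J` at `w₁`, `w₂` and `w₁ + w₂` gives `a₁b₁ = 1 - 1/d₁`, `a₂b₂ = 1 - 1/d₂` and
`a₁b₂ + a₂b₁ = 2`, so either relation forces `a₁b₁ = a₂b₂ = 4/5`, that is `d₁ = d₂ = 5`.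
-/

section FunctionalEquation

lemma coeffs_eq_zero_of_hyperbola {a b c d e W : ℝ}
    (h : ∀ s t, s * t = W → a * s ^ 2 + b * t ^ 2 + c * s + d * t + e = 0) :
    a = 0 ∧ b = 0 ∧ c = 0 ∧ d = 0 ∧ e = 0 := by
  have right (s : ℝ) (hs : s ≠ 0) := h s (W / s) (mul_div_cancel₀ W hs)
  have left (t : ℝ) (ht : t ≠ 0) := h (W / t) t (div_mul_cancel₀ W ht)
  have r₁ := right 1 (by norm_num)
  have r₂ := right (-1) (by norm_num)
  have r₃ := right 2 (by norm_num)
  have r₄ := right (-2) (by norm_num)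
  have r₅ := right 3 (by norm_num)
  have l₁ := left 1 (by norm_num)
  have l₂ := left (-1) (by norm_num)
  have l₃ := left 2 (by norm_num)
  have l₄ := left (-2) (by norm_num)
  refine ⟨?_, ?_, ?_, ?_, ?_⟩ <;> linarith

lemma coeffs_eq_zero_of_exp {γ c₀ c₁ c₂ : ℝ} (hγ : γ ≠ 0)
    (h : ∀ x, c₀ + c₁ * Real.exp (γ * x) + c₂ * (Real.exp (γ * x))⁻¹ = 0) :
    c₀ = 0 ∧ c₁ = 0 ∧ c₂ = 0 := by
  have laurent (X : ℝ) (hX : 0 < X) : c₀ + c₁ * X + c₂ * X⁻¹ = 0 := by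
    simpa only [mul_div_cancel₀ _ hγ, Real.exp_log hX] using h (Real.log X / γ)
  have h₁ := laurent 1 (by norm_num)
  have h₂ := laurent 2 (by norm_num)
  have h₃ := laurent 2⁻¹ (by norm_num)
  refine ⟨?_, ?_, ?_⟩ <;> linarith

lemma exists_coeffs_of_separated {X Y K : Type*} [Field K] {P R E : X → K} {Q T G : Y → K}
    (hE : ∀ x, E x ≠ 0) (hG : ∀ y, G y ≠ 0)
    (hE' : ∃ x₀ x₁, E x₀ ≠ E x₁) (hG' : ∃ y₀ y₁, G y₀ ≠ G y₁)
    (h : ∀ x y, P x + Q y + E x * G y * (R x + T y) = 0) :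
    ∃ p₀ p₁ r₀ r₁ : K, (∀ x, P x = p₀ + p₁ * E x) ∧ (∀ x, R x = r₀ + r₁ * (E x)⁻¹) ∧
      (∀ y, Q y = -p₀ - r₁ * G y) ∧ (∀ y, T y = -r₀ - p₁ * (G y)⁻¹) := by
  obtain ⟨x₀, x₁, hx⟩ := hE'
  obtain ⟨y₀, y₁, hy⟩ := hG'
  have hy' : G y₁ - G y₀ ≠ 0 := sub_ne_zero.2 hy.symm
  obtain ⟨r₁, hr₁⟩ : ∃ r₁, r₁ * (G y₁ - G y₀) = Q y₀ - Q y₁ := ⟨_, div_mul_cancel₀ _ hy'⟩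
  obtain ⟨r₀, hr₀⟩ : ∃ r₀, r₀ * (G y₁ - G y₀) = G y₀ * T y₀ - G y₁ * T y₁ :=
    ⟨_, div_mul_cancel₀ _ hy'⟩
  have hR (x) : R x = r₀ + r₁ * (E x)⁻¹ := by
    have hER : E x * R x = E x * r₀ + r₁ :=
      mul_right_cancel₀ hy' (by linear_combination h x y₁ - h x y₀ - E x * hr₀ - hr₁)
    have hEx := hE x
    field_simp
    linear_combination hER
  obtain ⟨p₀, hp₀⟩ : ∃ p₀, p₀ = -Q y₀ - G y₀ * r₁ := ⟨_, rfl⟩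
  obtain ⟨p₁, hp₁⟩ : ∃ p₁, p₁ = -G y₀ * (r₀ + T y₀) := ⟨_, rfl⟩
  have hP (x) : P x = p₀ + p₁ * E x := by
    have hxy := h x y₀
    rw [hR] at hxy
    have hEx := hE x
    field_simp at hxy
    linear_combination hxy - hp₀ - E x * hp₁
  have affine (x y) : p₀ + Q y + G y * r₁ + E x * (p₁ + G y * (r₀ + T y)) = 0 := by
    have hxy := h x y
    rw [hP, hR] at hxy
    have hEx := hE x
    field_simp at hxy
    linear_combination hxy
  have slope (y) : p₁ + G y * (r₀ + T y) = 0 := by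
    refine (mul_eq_zero.1 ?_).resolve_left (sub_ne_zero.2 hx)
    linear_combination affine x₀ y - affine x₁ y
  refine ⟨p₀, p₁, r₀, r₁, hP, hR, fun y => ?_, fun y => ?_⟩
  · linear_combination affine x₀ y - E x₀ * slope y
  · have hGy := hG y
    field_simp
    linear_combination slope y

lemma hasDerivAt_exp_const_mul (γ x : ℝ) :
    HasDerivAt (fun x => Real.exp (γ * x)) (γ * Real.exp (γ * x)) x := by
  simpa [mul_comm] using ((hasDerivAt_id x).const_mul γ).exp

lemma relations_of_exp_forced_odes {u u' : ℝ → ℝ} {a b p₀ p₁ r₀ r₁ : ℝ} (hab : a ≠ b)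
    (hu : ∀ x, HasDerivAt u (u' x) x)
    (hP : ∀ x, u' x + a * u x = p₀ + p₁ * Real.exp ((b - a) * x))
    (hR : ∀ x, u' x + b * u x = r₀ + r₁ * (Real.exp ((b - a) * x))⁻¹) :
    b * p₀ = a * r₀ ∧ (p₁ = 0 ∨ a = 2 * b) ∧ (r₁ = 0 ∨ b = 2 * a) := by
  -- The difference of the two equations determines `u`; differentiating it and substituting back
  -- leaves a Laurent polynomial identity in `exp ((b - a) * x)`.
  have hγ : b - a ≠ 0 := sub_ne_zero.2 hab.symm
  have hu_eq : (fun x => (b - a) * u x) = fun x =>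
      r₀ - p₀ + r₁ * (Real.exp ((b - a) * x))⁻¹ - p₁ * Real.exp ((b - a) * x) := by
    funext x
    linear_combination hR x - hP x
  have hu'_eq (x) : (b - a) * u' x =
      -(b - a) * (r₁ * (Real.exp ((b - a) * x))⁻¹ + p₁ * Real.exp ((b - a) * x)) := by
    refine ((hu x).const_mul (b - a)).unique ?_
    rw [hu_eq]
    have hE := hasDerivAt_exp_const_mul (b - a) x
    have hE₀ := Real.exp_ne_zero ((b - a) * x)
    convert (((hE.fun_inv hE₀).const_mul r₁).const_add (r₀ - p₀)).fun_sub (hE.const_mul p₁) using 1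
    field_simp
    ring
  obtain ⟨h₀, h₁, h₂⟩ := coeffs_eq_zero_of_exp (c₀ := b * p₀ - a * r₀)
    (c₁ := p₁ * (2 * b - a)) (c₂ := r₁ * (b - 2 * a)) hγ
    fun x => by linear_combination hu'_eq x - b * hP x + a * hR x
  rw [mul_eq_zero, sub_eq_zero] at h₁ h₂
  exact ⟨sub_eq_zero.1 h₀, h₁.imp_right Eq.symm, h₂⟩

lemma add_ratio_mul_exp_sub_mul_eq_zero {B₁ B₂ s₁ s₂ u v : ℝ} (hB₁ : B₁ ≠ 0)
    (h : B₁ * Real.exp s₁ * u + B₂ * Real.exp s₂ * v = 0) :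
    u + B₂ / B₁ * Real.exp (s₂ - s₁) * v = 0 := by
  have hs₁ := Real.exp_ne_zero s₁
  rw [Real.exp_sub]
  field_simp
  linear_combination h

lemma exists_exp_forcing_of_conformal_symmetry {f g f' g' : ℝ → ℝ} {a₁ a₂ b₁ b₂ B₁ B₂ : ℝ}
    (hB₁ : B₁ ≠ 0) (hB₂ : B₂ ≠ 0) (ha : a₁ ≠ a₂) (hb : b₁ ≠ b₂)
    (h : ∀ x y,
      B₁ * Real.exp (a₁ * x + b₁ * y) * ((f' x + a₁ * f x) + (g' y + b₁ * g y)) +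
      B₂ * Real.exp (a₂ * x + b₂ * y) * ((f' x + a₂ * f x) + (g' y + b₂ * g y)) = 0) :
    ∃ p₀ p₁ r₀ r₁ : ℝ,
      (∀ x, f' x + a₁ * f x = p₀ + p₁ * Real.exp ((a₂ - a₁) * x)) ∧
      (∀ x, f' x + a₂ * f x = r₀ + r₁ * (Real.exp ((a₂ - a₁) * x))⁻¹) ∧
      (∀ y, g' y + b₁ * g y = -p₀ + -(r₁ * (B₂ / B₁)) * Real.exp ((b₂ - b₁) * y)) ∧
      (∀ y, g' y + b₂ * g y = -r₀ + -(p₁ * (B₂ / B₁)⁻¹) * (Real.exp ((b₂ - b₁) * y))⁻¹) := by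
  have exp_nonconst {γ : ℝ} (hγ : γ ≠ 0) : Real.exp (γ * 1) ≠ Real.exp (γ * 0) := by
    simpa using hγ
  have hκ : B₂ / B₁ ≠ 0 := div_ne_zero hB₂ hB₁
  obtain ⟨p₀, p₁, r₀, r₁, hP, hR, hQ, hT⟩ := exists_coeffs_of_separated
    (P := fun x => f' x + a₁ * f x) (R := fun x => f' x + a₂ * f x)
    (E := fun x => Real.exp ((a₂ - a₁) * x))
    (Q := fun y => g' y + b₁ * g y) (T := fun y => g' y + b₂ * g y)
    (G := fun y => B₂ / B₁ * Real.exp ((b₂ - b₁) * y))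
    (fun x => Real.exp_ne_zero _) (fun y => mul_ne_zero hκ (Real.exp_ne_zero _))
    ⟨1, 0, exp_nonconst (sub_ne_zero.2 ha.symm)⟩
    ⟨1, 0, (mul_right_injective₀ hκ).ne (exp_nonconst (sub_ne_zero.2 hb.symm))⟩ fun x y => by
      have hxy := add_ratio_mul_exp_sub_mul_eq_zero hB₁ (h x y)
      rw [show a₂ * x + b₂ * y - (a₁ * x + b₁ * y) = (a₂ - a₁) * x + (b₂ - b₁) * y by ring,
        Real.exp_add] at hxy
      linear_combination hxy
  refine ⟨p₀, p₁, r₀, r₁, hP, hR, fun y => ?_, fun y => ?_⟩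
  · linear_combination hQ y
  · rw [hT, mul_inv]
    ring

lemma exponents_of_conformal_symmetry {f g f' g' : ℝ → ℝ} {a₁ a₂ b₁ b₂ B₁ B₂ : ℝ}
    (hf : ∀ x, HasDerivAt f (f' x) x) (hg : ∀ y, HasDerivAt g (g' y) y)
    (hB₁ : B₁ ≠ 0) (hB₂ : B₂ ≠ 0) (ha : a₁ ≠ a₂) (hb : b₁ ≠ b₂) (hdet : a₁ * b₂ ≠ a₂ * b₁)
    (h : ∀ x y,
      B₁ * Real.exp (a₁ * x + b₁ * y) * ((f' x + a₁ * f x) + (g' y + b₁ * g y)) +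
      B₂ * Real.exp (a₂ * x + b₂ * y) * ((f' x + a₂ * f x) + (g' y + b₂ * g y)) = 0)
    (hne : f ≠ 0 ∨ g ≠ 0) :
    (a₁ = 2 * a₂ ∧ b₂ = 2 * b₁) ∨ (a₂ = 2 * a₁ ∧ b₁ = 2 * b₂) := by
  obtain ⟨p₀, p₁, r₀, r₁, hP, hR, hQ, hT⟩ :=
    exists_exp_forcing_of_conformal_symmetry hB₁ hB₂ ha hb h
  obtain ⟨hf₀, hp₁, hr₁⟩ := relations_of_exp_forced_odes ha hf hP hR
  obtain ⟨hg₀, hr₁', hp₁'⟩ := relations_of_exp_forced_odes hb hg hQ hT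
  have hκ : B₂ / B₁ ≠ 0 := div_ne_zero hB₂ hB₁
  simp only [neg_eq_zero, mul_eq_zero, hκ, inv_eq_zero, or_false] at hr₁' hp₁'
  rcases ne_or_eq p₁ 0 with hp | rfl
  · exact .inl ⟨hp₁.resolve_left hp, hp₁'.resolve_left hp⟩
  rcases ne_or_eq r₁ 0 with hr | rfl
  · exact .inr ⟨hr₁.resolve_left hr, hr₁'.resolve_left hr⟩
  exfalso
  have hp₀ : p₀ = 0 := mul_left_cancel₀ (sub_ne_zero.2 hdet) (by
    linear_combination -b₁ * hf₀ - a₁ * hg₀)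
  have hr₀ : r₀ = 0 := mul_left_cancel₀ (sub_ne_zero.2 hdet) (by
    linear_combination -b₂ * hf₀ - a₂ * hg₀)
  subst hp₀ hr₀
  have hf_zero (x) : f x = 0 :=
    mul_left_cancel₀ (sub_ne_zero.2 ha) (by linear_combination hP x - hR x)
  have hg_zero (y) : g y = 0 :=
    mul_left_cancel₀ (sub_ne_zero.2 hb) (by linear_combination hQ y - hT y)
  exact hne.elim (· (funext hf_zero)) (· (funext hg_zero))

end FunctionalEquation

section DirectionalDerivative

variable {V W : Type*} [NormedAddCommGroup V] [NormedSpace ℝ V]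
  [NormedAddCommGroup W] [NormedSpace ℝ W]

lemma hasDerivAt_comp_add_smul {G : V → W} (hG : Differentiable ℝ G) (q w : V) (t : ℝ) :
    HasDerivAt (fun t : ℝ => G (q + t • w)) (fderiv ℝ G (q + t • w) w) t := by
  have hline : HasDerivAt (fun t : ℝ => q + t • w) w t := by
    simpa using ((hasDerivAt_id t).smul_const w).const_add q
  exact (hG _).hasFDerivAt.comp_hasDerivAt t hline

lemma apply_add_smul_of_fderiv_eq_zero {G : V → W} (hG : Differentiable ℝ G) {w : V}
    (hw : ∀ q, fderiv ℝ G q w = 0) (q : V) (t : ℝ) : G (q + t • w) = G q := by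
  have hline := hasDerivAt_comp_add_smul hG q w
  have h := is_const_of_deriv_eq_zero (fun t => (hline t).differentiableAt)
    (fun t => (hline t).deriv.trans (hw _)) t 0
  simpa only [zero_smul, add_zero] using h

lemma fderiv_add_smul_of_fderiv_eq_zero {G : V → W} (hG : Differentiable ℝ G) {w : V}
    (hw : ∀ q, fderiv ℝ G q w = 0) (q : V) (t : ℝ) :
    fderiv ℝ G (q + t • w) = fderiv ℝ G q := by
  rw [← fderiv_comp_add_right]
  simp only [apply_add_smul_of_fderiv_eq_zero hG hw]

lemma eq_zero_of_comp_smul_eq_zero {G : V → W} (hG : Differentiable ℝ G) {v w : V}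
    (hspan : ∀ q, ∃ x y : ℝ, x • v + y • w = q) (hw : ∀ q, fderiv ℝ G q w = 0)
    (hv : (fun x : ℝ => G (x • v)) = 0) : G = 0 := by
  funext q
  obtain ⟨x, y, rfl⟩ := hspan q
  rw [apply_add_smul_of_fderiv_eq_zero hG hw]
  exact congrFun hv x

end DirectionalDerivative

section Coordinates

lemma deriv_comp_update {ι : Type*} [Finite ι] [DecidableEq ι] {G : (ι → ℝ) → ℝ} {q : ι → ℝ}
    (hG : DifferentiableAt ℝ G q) (i : ι) :
    deriv (fun t => G (Function.update q i t)) (q i) = fderiv ℝ G q (Pi.single i 1) := by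
  have := Fintype.ofFinite ι
  have hG' : HasFDerivAt G (fderiv ℝ G q) (Function.update q i (q i)) := by
    simpa only [Function.update_eq_self] using hG.hasFDerivAt
  exact (hG'.comp_hasDerivAt (q i) (hasDerivAt_update q i (q i))).deriv

variable {ι : Type*} [Fintype ι]

lemma sum_apply_single_mul [DecidableEq ι] (φ : (ι → ℝ) →L[ℝ] ℝ) (w : ι → ℝ) :
    ∑ i, φ (Pi.single i 1) * w i = φ w := by
  conv_rhs => rw [pi_eq_sum_univ' w]
  simp only [map_sum, map_smul, smul_eq_mul, mul_comm]

lemma hasFDerivAt_dotProduct (w q : ι → ℝ) :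
    HasFDerivAt (fun q => w ⬝ᵥ q) (dotProductBilin ℝ ℝ w).toContinuousLinearMap q :=
  (dotProductBilin ℝ ℝ w).toContinuousLinearMap.hasFDerivAt

lemma hasFDerivAt_const_mul_exp_dotProduct (A : ℝ) (w q : ι → ℝ) :
    HasFDerivAt (fun q => A * Real.exp (w ⬝ᵥ q))
      (A • Real.exp (w ⬝ᵥ q) • (dotProductBilin ℝ ℝ w).toContinuousLinearMap) q :=
  (hasFDerivAt_dotProduct w q).exp.const_mul A

lemma fderiv_const_mul_exp_dotProduct (A : ℝ) (w q v : ι → ℝ) :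
    fderiv ℝ (fun q => A * Real.exp (w ⬝ᵥ q)) q v = A * Real.exp (w ⬝ᵥ q) * (w ⬝ᵥ v) := by
  simp [(hasFDerivAt_const_mul_exp_dotProduct A w q).fderiv, mul_assoc]

end Coordinates

section Bracket

variable {F : (Fin 2 → ℝ) → (Fin 2 → ℝ) → ℝ} {i : Fin 2} {q p : Fin 2 → ℝ}

lemma pderivQ_eq_fderiv (hF : DifferentiableAt ℝ (fun q' => F q' p) q) :
    pderivQ F i q p = fderiv ℝ (fun q' => F q' p) q (Pi.single i 1) :=
  deriv_comp_update hF i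

lemma pderivP_eq_fderiv (hF : DifferentiableAt ℝ (F q) p) :
    pderivP F i q p = fderiv ℝ (F q) p (Pi.single i 1) :=
  deriv_comp_update hF i

end Bracket

/-- The potential `U = v²S`, for which `H = v⁻¹(J - U)`. -/
noncomputable def conformalPotential (d1 d2 : ℕ) (S : (Fin 2 → ℝ) → ℝ) (q : Fin 2 → ℝ) : ℝ :=
  S q * vol d1 d2 q ^ 2

/-- Linear forms `L`, `M` on momentum space in which `J` becomes a product, so that the vectors
`L` and `M` of configuration space span the two null directions of the metric
dual to `J`. -/
structure IsNullFrame (d1 d2 : ℕ) (L M : Fin 2 → ℝ) : Prop where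
  det_ne_zero : L 0 * M 1 - L 1 * M 0 ≠ 0
  Jform_eq : ∀ p, Jform d1 d2 p = (L ⬝ᵥ p) * (M ⬝ᵥ p)

/-- `F` is conserved along the flow of `H` on the zero level `V_H`, though possibly not off it. -/
def IsFirstIntegralOnZeroLevel (H F : (Fin 2 → ℝ) → (Fin 2 → ℝ) → ℝ) : Prop :=
  ∀ q p, H q p = 0 → poisson F H q p = 0

section Hamiltonian

variable {d1 d2 : ℕ} {S : (Fin 2 → ℝ) → ℝ} {q p : Fin 2 → ℝ}

lemma vol_ne_zero (d1 d2 : ℕ) (q : Fin 2 → ℝ) : vol d1 d2 q ≠ 0 := Real.exp_ne_zero _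

lemma differentiable_vol (d1 d2 : ℕ) : Differentiable ℝ (vol d1 d2) := by
  unfold vol
  fun_prop

lemma differentiable_conformalPotential (hS : Differentiable ℝ S) :
    Differentiable ℝ (conformalPotential d1 d2 S) :=
  hS.mul ((differentiable_vol d1 d2).pow 2)

lemma Ham_eq : Ham d1 d2 S q p =
    (vol d1 d2 q)⁻¹ * (Jform d1 d2 p - conformalPotential d1 d2 S q) := by
  have hv := vol_ne_zero d1 d2 q
  rw [Ham, conformalPotential]
  field_simp

lemma Ham_eq_zero_iff :
    Ham d1 d2 S q p = 0 ↔ Jform d1 d2 p = conformalPotential d1 d2 S q := by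
  simp only [Ham_eq, mul_eq_zero, inv_eq_zero, vol_ne_zero, false_or, sub_eq_zero]

lemma pderivQ_Ham (hS : Differentiable ℝ S) (hH : Ham d1 d2 S q p = 0) (i : Fin 2) :
    pderivQ (Ham d1 d2 S) i q p =
      -((vol d1 d2 q)⁻¹ * fderiv ℝ (conformalPotential d1 d2 S) q (Pi.single i 1)) := by
  have hU := differentiable_conformalPotential (d1 := d1) (d2 := d2) hS q
  have hderiv := ((differentiable_vol d1 d2 q).inv (vol_ne_zero d1 d2 q)).hasFDerivAt.mul
    (hU.hasFDerivAt.const_sub (Jform d1 d2 p))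
  have hHam : (fun q' => Ham d1 d2 S q' p) =
      (vol d1 d2)⁻¹ * fun q' => Jform d1 d2 p - conformalPotential d1 d2 S q' :=
    funext fun q' => Ham_eq
  rw [← hHam] at hderiv
  rw [pderivQ_eq_fderiv hderiv.differentiableAt, hderiv.fderiv]
  -- `J - U` vanishes at `(q, p)`, so the derivative of the prefactor `v⁻¹` does not contribute.
  simp [sub_eq_zero.2 (Ham_eq_zero_iff.1 hH)]

lemma IsNullFrame.pderivP_Ham {L M : Fin 2 → ℝ} (h : IsNullFrame d1 d2 L M) (i : Fin 2) :
    pderivP (Ham d1 d2 S) i q p =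
      (vol d1 d2 q)⁻¹ * ((L ⬝ᵥ p) * M i + (M ⬝ᵥ p) * L i) := by
  have hderiv := (((hasFDerivAt_dotProduct L p).fun_mul (hasFDerivAt_dotProduct M p)).sub_const
    (conformalPotential d1 d2 S q)).const_mul (vol d1 d2 q)⁻¹
  have hHam : Ham d1 d2 S q = fun p' =>
      (vol d1 d2 q)⁻¹ * ((L ⬝ᵥ p') * (M ⬝ᵥ p') - conformalPotential d1 d2 S q) :=
    funext fun p' => by rw [Ham_eq, h.Jform_eq]
  rw [← hHam] at hderiv
  rw [pderivP_eq_fderiv hderiv.differentiableAt, hderiv.fderiv]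
  simp only [add_apply, smul_apply, LinearMap.coe_toContinuousLinearMap',
    dotProductBilin_apply_apply, dotProduct_single_one, smul_eq_mul]

lemma IsNullFrame.vol_mul_poisson_Ham {F : (Fin 2 → ℝ) → (Fin 2 → ℝ) → ℝ} {L M : Fin 2 → ℝ}
    (h : IsNullFrame d1 d2 L M) (hS : Differentiable ℝ S)
    (hF : DifferentiableAt ℝ (fun q' => F q' p) q) (hH : Ham d1 d2 S q p = 0) :
    vol d1 d2 q * poisson F (Ham d1 d2 S) q p =
      (M ⬝ᵥ p) * fderiv ℝ (fun q' => F q' p) q L + (L ⬝ᵥ p) * fderiv ℝ (fun q' => F q' p) q M +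
        fderiv ℝ (conformalPotential d1 d2 S) q (fun i => pderivP F i q p) := by
  have hv := vol_ne_zero d1 d2 q
  simp only [poisson, h.pderivP_Ham, pderivQ_Ham hS hH, pderivQ_eq_fderiv hF,
    ← sum_apply_single_mul _ L, ← sum_apply_single_mul _ M,
    ← sum_apply_single_mul _ fun i => pderivP F i q p, Finset.mul_sum, ← Finset.sum_add_distrib]
  refine Finset.sum_congr rfl fun i _ => ?_
  field_simp
  ring

lemma IsNullFrame.vol_mul_poisson_Ham_linear {f g F₀ : (Fin 2 → ℝ) → ℝ} {L M : Fin 2 → ℝ}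
    (h : IsNullFrame d1 d2 L M) (hS : Differentiable ℝ S) (hf : Differentiable ℝ f)
    (hg : Differentiable ℝ g) (hF₀ : Differentiable ℝ F₀) (hH : Ham d1 d2 S q p = 0) :
    vol d1 d2 q * poisson (fun q p => f q * (L ⬝ᵥ p) + g q * (M ⬝ᵥ p) + F₀ q)
        (Ham d1 d2 S) q p =
      fderiv ℝ f q M * (L ⬝ᵥ p) ^ 2 + fderiv ℝ g q L * (M ⬝ᵥ p) ^ 2 +
        fderiv ℝ F₀ q M * (L ⬝ᵥ p) + fderiv ℝ F₀ q L * (M ⬝ᵥ p) +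
        (conformalPotential d1 d2 S q * (fderiv ℝ f q L + fderiv ℝ g q M) +
          f q * fderiv ℝ (conformalPotential d1 d2 S) q L +
          g q * fderiv ℝ (conformalPotential d1 d2 S) q M) := by
  have hq : HasFDerivAt (fun q => f q * (L ⬝ᵥ p) + g q * (M ⬝ᵥ p) + F₀ q)
      ((L ⬝ᵥ p) • fderiv ℝ f q + (M ⬝ᵥ p) • fderiv ℝ g q + fderiv ℝ F₀ q) q :=
    (((hf q).hasFDerivAt.mul_const _).add ((hg q).hasFDerivAt.mul_const _)).add
      (hF₀ q).hasFDerivAt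
  have hp (i : Fin 2) :
      pderivP (fun q p => f q * (L ⬝ᵥ p) + g q * (M ⬝ᵥ p) + F₀ q) i q p =
        (f q • L + g q • M) i := by
    have hderiv := (((hasFDerivAt_dotProduct L p).const_mul (f q)).fun_add
      ((hasFDerivAt_dotProduct M p).const_mul (g q))).add_const (F₀ q)
    rw [pderivP_eq_fderiv hderiv.differentiableAt, hderiv.fderiv]
    simp
  rw [h.vol_mul_poisson_Ham hS hq.differentiableAt hH, hq.fderiv, funext hp, map_add, map_smul,
    map_smul, ← Ham_eq_zero_iff.1 hH, h.Jform_eq]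
  simp only [FunLike.coe_add, FunLike.coe_smul, Pi.add_apply, Pi.smul_apply, smul_eq_mul]
  ring

end Hamiltonian

section NullFrame

variable {d1 d2 : ℕ} {S : (Fin 2 → ℝ) → ℝ} {L M : Fin 2 → ℝ}

lemma exists_dotProduct_eq (hdet : L 0 * M 1 - L 1 * M 0 ≠ 0) (s t : ℝ) :
    ∃ p, L ⬝ᵥ p = s ∧ M ⬝ᵥ p = t := by
  obtain ⟨D, hD⟩ : ∃ D, D = L 0 * M 1 - L 1 * M 0 := ⟨_, rfl⟩
  rw [← hD] at hdet
  refine ⟨![(s * M 1 - t * L 1) / D, (L 0 * t - M 0 * s) / D], ?_, ?_⟩ <;>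
    simp only [Matrix.vec2_dotProduct, Matrix.cons_val_zero, Matrix.cons_val_one] <;>
    field_simp <;>
    rw [hD] <;>
    ring

lemma cramer_smul_add_smul (hdet : L 0 * M 1 - L 1 * M 0 ≠ 0) (x : Fin 2 → ℝ) :
    ((x 0 * M 1 - x 1 * M 0) / (L 0 * M 1 - L 1 * M 0)) • L +
      ((L 0 * x 1 - L 1 * x 0) / (L 0 * M 1 - L 1 * M 0)) • M = x := by
  obtain ⟨D, hD⟩ : ∃ D, D = L 0 * M 1 - L 1 * M 0 := ⟨_, rfl⟩
  rw [← hD] at hdet ⊢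
  ext i
  fin_cases i <;>
    simp only [Pi.add_apply, Pi.smul_apply, smul_eq_mul, Fin.zero_eta, Fin.mk_one] <;>
    field_simp <;>
    rw [hD] <;>
    ring

lemma IsNullFrame.isFirstIntegralOnZeroLevel_iff {f g F₀ : (Fin 2 → ℝ) → ℝ}
    (h : IsNullFrame d1 d2 L M) (hS : Differentiable ℝ S) (hf : Differentiable ℝ f)
    (hg : Differentiable ℝ g) (hF₀ : Differentiable ℝ F₀) :
    IsFirstIntegralOnZeroLevel (Ham d1 d2 S)
        (fun q p => f q * (L ⬝ᵥ p) + g q * (M ⬝ᵥ p) + F₀ q) ↔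
      ∀ q, fderiv ℝ f q M = 0 ∧ fderiv ℝ g q L = 0 ∧ fderiv ℝ F₀ q M = 0 ∧ fderiv ℝ F₀ q L = 0 ∧
        conformalPotential d1 d2 S q * (fderiv ℝ f q L + fderiv ℝ g q M) +
          f q * fderiv ℝ (conformalPotential d1 d2 S) q L +
          g q * fderiv ℝ (conformalPotential d1 d2 S) q M = 0 := by
  refine forall_congr' fun q => ⟨fun hF => ?_, fun hq p hH => ?_⟩
  · refine coeffs_eq_zero_of_hyperbola (W := conformalPotential d1 d2 S q) fun s t hst => ?_
    obtain ⟨p, rfl, rfl⟩ := exists_dotProduct_eq h.det_ne_zero s t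
    have hH : Ham d1 d2 S q p = 0 := by rw [Ham_eq_zero_iff, h.Jform_eq, hst]
    rw [← h.vol_mul_poisson_Ham_linear hS hf hg hF₀ hH, hF p hH, mul_zero]
  · obtain ⟨hfM, hgL, hF₀M, hF₀L, hU⟩ := hq
    have hv := h.vol_mul_poisson_Ham_linear hS hf hg hF₀ hH
    rw [hfM, hgL, hF₀M, hF₀L, hU] at hv
    simpa [vol_ne_zero] using hv

lemma exists_isNullFrame (hd1 : 0 < d1) (hd2 : 0 < d2) : ∃ L M, IsNullFrame d1 d2 L M := by
  have h1 : (1 : ℝ) ≤ d1 := by exact_mod_cast hd1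
  have h2 : (1 : ℝ) ≤ d2 := by exact_mod_cast hd2
  obtain ⟨x, hx⟩ : ∃ x : ℝ, x = d1 := ⟨_, rfl⟩
  obtain ⟨y, hy⟩ : ∃ y : ℝ, y = d2 := ⟨_, rfl⟩
  rw [← hx] at h1
  rw [← hy] at h2
  have hn : 0 < x + y - 1 := by linarith
  obtain ⟨a, ha, ha2⟩ : ∃ a : ℝ, 0 < a ∧ a ^ 2 = 1 / ((x + y) * (x + y - 1)) :=
    ⟨√(1 / ((x + y) * (x + y - 1))), by positivity, Real.sq_sqrt (by positivity)⟩
  obtain ⟨b, hb, hb2⟩ : ∃ b : ℝ, 0 < b ∧ b ^ 2 = 1 / ((x + y) * (x * y)) :=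
    ⟨√(1 / ((x + y) * (x * y))), by positivity, Real.sq_sqrt (by positivity)⟩
  refine ⟨![a - b * y, a + b * x], ![a + b * y, a - b * x], ⟨?_, fun p => ?_⟩⟩
  · have hdet : 0 < a * b * (x + y) := by positivity
    simp only [Matrix.cons_val_zero, Matrix.cons_val_one]
    intro h
    linarith
  · have hsq : (![a - b * y, a + b * x] ⬝ᵥ p) * (![a + b * y, a - b * x] ⬝ᵥ p) =
        a ^ 2 * (p 0 + p 1) ^ 2 - b ^ 2 * (y * p 0 - x * p 1) ^ 2 := by
      simp only [Matrix.vec2_dotProduct, Matrix.cons_val_zero, Matrix.cons_val_one]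
      ring
    rw [hsq, ha2, hb2, Jform, ← hx, ← hy]
    field_simp
    ring

end NullFrame

/-- The scalar curvature `A₁e^{-q₁} + A₂e^{-q₂}` of the orbits, as for a product of two Einstein
manifolds scaled by `e^{q₁}` and `e^{q₂}`. -/
noncomputable def scalarCurvature (A₁ A₂ : ℝ) (q : Fin 2 → ℝ) : ℝ :=
  A₁ * Real.exp (-(q 0)) + A₂ * Real.exp (-(q 1))

/-- The exponents `(d₁ - 1, d₂)` and `(d₁, d₂ - 1)` of the two exponentials in the conformal
potential of `scalarCurvature`. -/
noncomputable def potentialExponent (d1 d2 : ℕ) : Fin 2 → Fin 2 → ℝ :=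
  ![![d1 - 1, d2], ![d1, d2 - 1]]

section ScalarCurvature

variable {d1 d2 : ℕ}

lemma differentiable_scalarCurvature (A₁ A₂ : ℝ) : Differentiable ℝ (scalarCurvature A₁ A₂) := by
  unfold scalarCurvature
  fun_prop

lemma conformalPotential_scalarCurvature (d1 d2 : ℕ) (A₁ A₂ : ℝ) :
    conformalPotential d1 d2 (scalarCurvature A₁ A₂) =
      fun q => A₁ * Real.exp (potentialExponent d1 d2 0 ⬝ᵥ q) +
        A₂ * Real.exp (potentialExponent d1 d2 1 ⬝ᵥ q) := by
  funext q
  rw [conformalPotential, scalarCurvature, vol, ← Real.exp_nat_mul, add_mul, mul_assoc, mul_assoc,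
    ← Real.exp_add, ← Real.exp_add]
  simp only [potentialExponent, Matrix.vec2_dotProduct, Matrix.cons_val_zero, Matrix.cons_val_one]
  push_cast
  ring_nf

lemma fderiv_conformalPotential_scalarCurvature (A₁ A₂ : ℝ) (q w : Fin 2 → ℝ) :
    fderiv ℝ (conformalPotential d1 d2 (scalarCurvature A₁ A₂)) q w =
      A₁ * Real.exp (potentialExponent d1 d2 0 ⬝ᵥ q) * (potentialExponent d1 d2 0 ⬝ᵥ w) +
        A₂ * Real.exp (potentialExponent d1 d2 1 ⬝ᵥ q) * (potentialExponent d1 d2 1 ⬝ᵥ w) := by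
  have hexp (A : ℝ) (v : Fin 2 → ℝ) := (hasFDerivAt_const_mul_exp_dotProduct A v q).differentiableAt
  rw [conformalPotential_scalarCurvature, fderiv_fun_add (hexp _ _) (hexp _ _), add_apply,
    fderiv_const_mul_exp_dotProduct, fderiv_const_mul_exp_dotProduct]

lemma IsNullFrame.isFirstIntegralOnZeroLevel_scalarCurvature_iff {A₁ A₂ : ℝ} {L M : Fin 2 → ℝ}
    {f g F₀ : (Fin 2 → ℝ) → ℝ} (h : IsNullFrame d1 d2 L M) (hf : Differentiable ℝ f)
    (hg : Differentiable ℝ g) (hF₀ : Differentiable ℝ F₀) :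
    let w := potentialExponent d1 d2
    IsFirstIntegralOnZeroLevel (Ham d1 d2 (scalarCurvature A₁ A₂))
        (fun q p => f q * (L ⬝ᵥ p) + g q * (M ⬝ᵥ p) + F₀ q) ↔
      ∀ q, fderiv ℝ f q M = 0 ∧ fderiv ℝ g q L = 0 ∧ fderiv ℝ F₀ q M = 0 ∧ fderiv ℝ F₀ q L = 0 ∧
        A₁ * Real.exp (w 0 ⬝ᵥ q) *
            ((fderiv ℝ f q L + (w 0 ⬝ᵥ L) * f q) + (fderiv ℝ g q M + (w 0 ⬝ᵥ M) * g q)) +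
          A₂ * Real.exp (w 1 ⬝ᵥ q) *
            ((fderiv ℝ f q L + (w 1 ⬝ᵥ L) * f q) + (fderiv ℝ g q M + (w 1 ⬝ᵥ M) * g q)) = 0 := by
  intro w
  rw [h.isFirstIntegralOnZeroLevel_iff (differentiable_scalarCurvature A₁ A₂) hf hg hF₀]
  refine forall_congr' fun q => ?_
  rw [fderiv_conformalPotential_scalarCurvature, fderiv_conformalPotential_scalarCurvature,
    conformalPotential_scalarCurvature]
  congr! 5
  ring

lemma Jform_potentialExponent_zero (hd1 : 0 < d1) (hd2 : 0 < d2) :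
    Jform d1 d2 (potentialExponent d1 d2 0) = 1 - 1 / d1 := by
  have h1 : (1 : ℝ) ≤ d1 := by exact_mod_cast hd1
  have h2 : (1 : ℝ) ≤ d2 := by exact_mod_cast hd2
  have hn : (d1 : ℝ) + d2 - 1 ≠ 0 := by linarith
  simp only [Jform, potentialExponent, Matrix.cons_val_zero, Matrix.cons_val_one]
  field_simp
  ring

lemma Jform_potentialExponent_one (hd1 : 0 < d1) (hd2 : 0 < d2) :
    Jform d1 d2 (potentialExponent d1 d2 1) = 1 - 1 / d2 := by
  have h1 : (1 : ℝ) ≤ d1 := by exact_mod_cast hd1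
  have h2 : (1 : ℝ) ≤ d2 := by exact_mod_cast hd2
  have hn : (d1 : ℝ) + d2 - 1 ≠ 0 := by linarith
  simp only [Jform, potentialExponent, Matrix.cons_val_zero, Matrix.cons_val_one]
  field_simp
  ring

lemma Jform_potentialExponent_add (hd1 : 0 < d1) (hd2 : 0 < d2) :
    Jform d1 d2 (potentialExponent d1 d2 0 + potentialExponent d1 d2 1) =
      4 - 1 / d1 - 1 / d2 := by
  have h1 : (1 : ℝ) ≤ d1 := by exact_mod_cast hd1
  have h2 : (1 : ℝ) ≤ d2 := by exact_mod_cast hd2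
  have hn : (d1 : ℝ) + d2 - 1 ≠ 0 := by linarith
  simp only [Jform, potentialExponent, Pi.add_apply, Matrix.cons_val_zero, Matrix.cons_val_one]
  field_simp
  ring

lemma IsNullFrame.potentialExponent_products {L M : Fin 2 → ℝ} (h : IsNullFrame d1 d2 L M)
    (hd1 : 0 < d1) (hd2 : 0 < d2) :
    let w := potentialExponent d1 d2
    (w 0 ⬝ᵥ L) * (w 0 ⬝ᵥ M) = 1 - 1 / d1 ∧ (w 1 ⬝ᵥ L) * (w 1 ⬝ᵥ M) = 1 - 1 / d2 ∧
      (w 0 ⬝ᵥ L) * (w 1 ⬝ᵥ M) + (w 1 ⬝ᵥ L) * (w 0 ⬝ᵥ M) = 2 := by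
  intro w
  have hJ (p) : Jform d1 d2 p = (p ⬝ᵥ L) * (p ⬝ᵥ M) := by
    rw [h.Jform_eq, dotProduct_comm L, dotProduct_comm M]
  have h₀ := (hJ (w 0)).symm.trans (Jform_potentialExponent_zero hd1 hd2)
  have h₁ := (hJ (w 1)).symm.trans (Jform_potentialExponent_one hd1 hd2)
  have hadd := (hJ (w 0 + w 1)).symm.trans (Jform_potentialExponent_add hd1 hd2)
  rw [add_dotProduct, add_dotProduct] at hadd
  exact ⟨h₀, h₁, by linear_combination hadd - h₀ - h₁⟩

end ScalarCurvature

section Dimensions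

variable {a₁ a₂ b₁ b₂ x y : ℝ}

lemma exponents_ne (hx : 1 ≤ x) (hy : 1 ≤ y) (h₁ : a₁ * b₁ = 1 - 1 / x)
    (h₂ : a₂ * b₂ = 1 - 1 / y) (h₁₂ : a₁ * b₂ + a₂ * b₁ = 2) :
    a₁ ≠ a₂ ∧ b₁ ≠ b₂ ∧ a₁ * b₂ ≠ a₂ * b₁ := by
  have hx' : 0 < 1 / x := by positivity
  have hy' : 0 < 1 / y := by positivity
  have hdiff : (a₁ - a₂) * (b₁ - b₂) ≠ 0 := by
    have : (a₁ - a₂) * (b₁ - b₂) = -(1 / x + 1 / y) := by linear_combination h₁ + h₂ - h₁₂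
    linarith
  have hdet : 0 < (a₁ * b₂ - a₂ * b₁) ^ 2 := by
    calc (0 : ℝ) < 4 * (1 / x + 1 / y * (1 - 1 / x)) := by
          have : 1 / x ≤ 1 := (div_le_one (by linarith)).2 hx
          have : 0 ≤ 1 / y * (1 - 1 / x) := mul_nonneg hy'.le (by linarith)
          linarith
      _ = (a₁ * b₂ + a₂ * b₁) ^ 2 - 4 * (a₁ * b₁) * (a₂ * b₂) := by
          rw [h₁, h₂, h₁₂]
          ring
      _ = (a₁ * b₂ - a₂ * b₁) ^ 2 := by ring
  exact ⟨sub_ne_zero.1 (left_ne_zero_of_mul hdiff), sub_ne_zero.1 (right_ne_zero_of_mul hdiff),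
    sub_ne_zero.1 (pow_ne_zero_iff two_ne_zero |>.1 hdet.ne')⟩

lemma eq_five_of_exponents_eq_two_mul (h₁ : a₁ * b₁ = 1 - 1 / x) (h₂ : a₂ * b₂ = 1 - 1 / y)
    (h₁₂ : a₁ * b₂ + a₂ * b₁ = 2)
    (h : (a₁ = 2 * a₂ ∧ b₂ = 2 * b₁) ∨ (a₂ = 2 * a₁ ∧ b₁ = 2 * b₂)) : x = 5 ∧ y = 5 := by
  have hx : 1 / x = 1 / 5 := by
    rcases h with ⟨rfl, rfl⟩ | ⟨rfl, rfl⟩ <;> linarith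
  have hy : 1 / y = 1 / 5 := by
    rcases h with ⟨rfl, rfl⟩ | ⟨rfl, rfl⟩ <;> linarith
  simpa using And.intro hx hy

end Dimensions

section FirstIntegral

variable {d1 d2 : ℕ} {A₁ A₂ : ℝ} {L M : Fin 2 → ℝ} {f g F₀ : (Fin 2 → ℝ) → ℝ}

lemma exists_linear_firstIntegral_iff_exists_frame (hdet : L 0 * M 1 - L 1 * M 0 ≠ 0)
    (k : WithTop ℕ∞) (H : (Fin 2 → ℝ) → (Fin 2 → ℝ) → ℝ) :
    (∃ F₁ F₂ F₀ : (Fin 2 → ℝ) → ℝ, ContDiff ℝ k F₁ ∧ ContDiff ℝ k F₂ ∧ ContDiff ℝ k F₀ ∧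
      (F₁ ≠ 0 ∨ F₂ ≠ 0) ∧
      IsFirstIntegralOnZeroLevel H fun q p => F₁ q * p 0 + F₂ q * p 1 + F₀ q) ↔
    ∃ f g F₀ : (Fin 2 → ℝ) → ℝ, ContDiff ℝ k f ∧ ContDiff ℝ k g ∧ ContDiff ℝ k F₀ ∧
      (f ≠ 0 ∨ g ≠ 0) ∧
      IsFirstIntegralOnZeroLevel H fun q p => f q * (L ⬝ᵥ p) + g q * (M ⬝ᵥ p) + F₀ q := by
  constructor
  · rintro ⟨F₁, F₂, F₀, hF₁, hF₂, hF₀, hne, hF⟩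
    obtain ⟨f, hf⟩ : ∃ f : (Fin 2 → ℝ) → ℝ,
      f = fun q => (F₁ q * M 1 - F₂ q * M 0) / (L 0 * M 1 - L 1 * M 0) := ⟨_, rfl⟩
    obtain ⟨g, hg⟩ : ∃ g : (Fin 2 → ℝ) → ℝ,
      g = fun q => (L 0 * F₂ q - L 1 * F₁ q) / (L 0 * M 1 - L 1 * M 0) := ⟨_, rfl⟩
    have hfg (q) : f q • L + g q • M = ![F₁ q, F₂ q] := by
      simpa only [hf, hg, Matrix.cons_val_zero, Matrix.cons_val_one] using
        cramer_smul_add_smul hdet ![F₁ q, F₂ q]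
    have hF₁_eq (q) : F₁ q = f q * L 0 + g q * M 0 := (congrFun (hfg q) 0).symm
    have hF₂_eq (q) : F₂ q = f q * L 1 + g q * M 1 := (congrFun (hfg q) 1).symm
    refine ⟨f, g, F₀, ?_, ?_, hF₀, ?_, ?_⟩
    · rw [hf]
      fun_prop
    · rw [hg]
      fun_prop
    · contrapose! hne
      exact ⟨funext fun q => by simp [hF₁_eq, hne], funext fun q => by simp [hF₂_eq, hne]⟩
    · convert hF using 3 with q p
      rw [hF₁_eq, hF₂_eq, Matrix.vec2_dotProduct, Matrix.vec2_dotProduct]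
      ring
  · rintro ⟨f, g, F₀, hf, hg, hF₀, hne, hF⟩
    refine ⟨fun q => f q * L 0 + g q * M 0, fun q => f q * L 1 + g q * M 1, F₀, by fun_prop,
      by fun_prop, hF₀, ?_, ?_⟩
    · contrapose! hne
      have h0 (q) : f q * L 0 + g q * M 0 = 0 := congrFun hne.1 q
      have h1 (q) : f q * L 1 + g q * M 1 = 0 := congrFun hne.2 q
      refine ⟨funext fun q => mul_right_cancel₀ hdet ?_, funext fun q => mul_right_cancel₀ hdet ?_⟩
      · rw [Pi.zero_apply]
        linear_combination M 1 * h0 q - M 0 * h1 q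
      · rw [Pi.zero_apply]
        linear_combination L 0 * h1 q - L 1 * h0 q
    · convert hF using 3 with q p
      rw [Matrix.vec2_dotProduct, Matrix.vec2_dotProduct]
      ring

lemma IsNullFrame.dims_eq_five_of_isFirstIntegral (h : IsNullFrame d1 d2 L M) (hd1 : 0 < d1)
    (hd2 : 0 < d2) (hA₁ : A₁ ≠ 0) (hA₂ : A₂ ≠ 0)
    (hf : Differentiable ℝ f) (hg : Differentiable ℝ g) (hF₀ : Differentiable ℝ F₀)
    (hne : f ≠ 0 ∨ g ≠ 0)
    (hF : IsFirstIntegralOnZeroLevel (Ham d1 d2 (scalarCurvature A₁ A₂))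
      fun q p => f q * (L ⬝ᵥ p) + g q * (M ⬝ᵥ p) + F₀ q) : d1 = 5 ∧ d2 = 5 := by
  have hq := (h.isFirstIntegralOnZeroLevel_scalarCurvature_iff hf hg hF₀).1 hF
  have hfM (q) : fderiv ℝ f q M = 0 := (hq q).1
  have hgL (q) : fderiv ℝ g q L = 0 := (hq q).2.1
  have hspan (q) : ∃ x y : ℝ, x • L + y • M = q := ⟨_, _, cramer_smul_add_smul h.det_ne_zero q⟩
  have hspan' (q) : ∃ y x : ℝ, y • M + x • L = q := by
    obtain ⟨x, y, rfl⟩ := hspan q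
    exact ⟨y, x, add_comm _ _⟩
  have hfline (x : ℝ) : HasDerivAt (fun x => f (x • L)) (fderiv ℝ f (x • L) L) x := by
    simpa only [zero_add] using hasDerivAt_comp_add_smul hf 0 L x
  have hgline (y : ℝ) : HasDerivAt (fun y => g (y • M)) (fderiv ℝ g (y • M) M) y := by
    simpa only [zero_add] using hasDerivAt_comp_add_smul hg 0 M y
  obtain ⟨h₁, h₂, h₁₂⟩ := h.potentialExponent_products hd1 hd2
  obtain ⟨ha, hb, hdet⟩ := exponents_ne (Nat.one_le_cast.2 hd1) (Nat.one_le_cast.2 hd2) h₁ h₂ h₁₂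
  have hratio := exponents_of_conformal_symmetry hfline hgline hA₁ hA₂ ha hb hdet
    (fun x y => by
      obtain ⟨-, -, -, -, hU⟩ := hq (x • L + y • M)
      rw [apply_add_smul_of_fderiv_eq_zero hf hfM, fderiv_add_smul_of_fderiv_eq_zero hf hfM,
        add_comm (x • L), apply_add_smul_of_fderiv_eq_zero hg hgL,
        fderiv_add_smul_of_fderiv_eq_zero hg hgL, add_comm (y • M)] at hU
      simpa only [dotProduct_add, dotProduct_smul, smul_eq_mul, mul_comm] using hU)
    (hne.imp (mt (eq_zero_of_comp_smul_eq_zero hf hspan hfM))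
      (mt (eq_zero_of_comp_smul_eq_zero hg hspan' hgL)))
  exact_mod_cast eq_five_of_exponents_eq_two_mul h₁ h₂ h₁₂ hratio

lemma isNullFrame_five_five : IsNullFrame 5 5 ![2, -1] ![-2 / 45, 4 / 45] where
  det_ne_zero := by norm_num
  Jform_eq p := by
    simp only [Jform, Matrix.vec2_dotProduct, Matrix.cons_val_zero, Matrix.cons_val_one]
    push_cast
    ring

-- Here `a₂ = 2a₁ = 6` and `b₁ = 2b₂ = 4/15`. The equations `f' = -a₁f` and `g' = -b₂g` leave only
-- a multiple of `g` in the first summand of the conformal equation and of `f` in the second; the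
-- constant `-45/2` makes the two cancel.
lemma isFirstIntegralOnZeroLevel_five_five (A₁ A₂ : ℝ) :
    IsFirstIntegralOnZeroLevel (Ham 5 5 (scalarCurvature A₁ A₂)) fun q p =>
      A₁ * Real.exp (![-2, -1] ⬝ᵥ q) * (![2, -1] ⬝ᵥ p) +
        -(45 / 2) * A₂ * Real.exp (![-1, -2] ⬝ᵥ q) * (![-2 / 45, 4 / 45] ⬝ᵥ p) + 0 := by
  have hexp (A : ℝ) (v : Fin 2 → ℝ) : Differentiable ℝ (fun q => A * Real.exp (v ⬝ᵥ q)) :=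
    fun q => (hasFDerivAt_const_mul_exp_dotProduct A v q).differentiableAt
  refine (isNullFrame_five_five.isFirstIntegralOnZeroLevel_scalarCurvature_iff (hexp _ _) (hexp _ _)
    (differentiable_const (0 : ℝ))).2 fun q => ?_
  have hexp_mul : Real.exp (potentialExponent 5 5 0 ⬝ᵥ q) * Real.exp (![-1, -2] ⬝ᵥ q) =
      Real.exp (potentialExponent 5 5 1 ⬝ᵥ q) * Real.exp (![-2, -1] ⬝ᵥ q) := by
    rw [← Real.exp_add, ← Real.exp_add, ← add_dotProduct, ← add_dotProduct]
    congr 2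
    ext i
    fin_cases i <;> norm_num [potentialExponent]
  simp only [fderiv_const_mul_exp_dotProduct, fderiv_fun_const]
  refine ⟨by norm_num, by norm_num, by simp, by simp, ?_⟩
  have ha₁ : potentialExponent 5 5 0 ⬝ᵥ ![2, -1] = 3 := by norm_num [potentialExponent]
  have ha₂ : potentialExponent 5 5 1 ⬝ᵥ ![2, -1] = 6 := by norm_num [potentialExponent]
  have hb₁ : potentialExponent 5 5 0 ⬝ᵥ ![-2 / 45, 4 / 45] = 4 / 15 := by
    norm_num [potentialExponent]
  have hb₂ : potentialExponent 5 5 1 ⬝ᵥ ![-2 / 45, 4 / 45] = 2 / 15 := by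
    norm_num [potentialExponent]
  have hf : (![-2, -1] : Fin 2 → ℝ) ⬝ᵥ ![2, -1] = -3 := by norm_num
  have hg : (![-1, -2] : Fin 2 → ℝ) ⬝ᵥ ![-2 / 45, 4 / 45] = -(2 / 15) := by norm_num
  rw [ha₁, ha₂, hb₁, hb₂, hf, hg]
  linear_combination -3 * A₁ * A₂ * hexp_mul

theorem linear_first_integral_iff_five_five_general {k : WithTop ℕ∞} (hk : k ≠ 0)
    (hd1 : 0 < d1) (hd2 : 0 < d2) (hA₁ : A₁ ≠ 0) (hA₂ : A₂ ≠ 0) (S : (Fin 2 → ℝ) → ℝ)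
    (hS : S = fun q => A₁ * Real.exp (-(q 0)) + A₂ * Real.exp (-(q 1))) :
    (∃ F₁ F₂ F₀ : (Fin 2 → ℝ) → ℝ, ContDiff ℝ k F₁ ∧ ContDiff ℝ k F₂ ∧ ContDiff ℝ k F₀ ∧
      (F₁ ≠ 0 ∨ F₂ ≠ 0) ∧
      ∀ q p : Fin 2 → ℝ, Ham d1 d2 S q p = 0 →
        poisson (fun q' p' => F₁ q' * p' 0 + F₂ q' * p' 1 + F₀ q') (Ham d1 d2 S) q p = 0) ↔
    (d1 = 5 ∧ d2 = 5) := by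
  obtain rfl : S = scalarCurvature A₁ A₂ := hS
  constructor
  · intro hF
    obtain ⟨L, M, hLM⟩ := exists_isNullFrame hd1 hd2
    obtain ⟨f, g, F₀, hf, hg, hF₀, hne, hF⟩ :=
      (exists_linear_firstIntegral_iff_exists_frame hLM.det_ne_zero k _).1 hF
    exact hLM.dims_eq_five_of_isFirstIntegral hd1 hd2 hA₁ hA₂ (hf.differentiable hk)
      (hg.differentiable hk) (hF₀.differentiable hk) hne hF
  · rintro ⟨rfl, rfl⟩
    refine (exists_linear_firstIntegral_iff_exists_frame isNullFrame_five_five.det_ne_zero k _).2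
      ⟨_, _, _, ?_, ?_, contDiff_const, ?_, isFirstIntegralOnZeroLevel_five_five A₁ A₂⟩
    · simp only [Matrix.vec2_dotProduct]
      fun_prop
    · simp only [Matrix.vec2_dotProduct]
      fun_prop
    · exact .inl fun h => by simpa [hA₁] using congrFun h 0

end FirstIntegral

/-- Dancer–Wang: for `S(q) = A₁e^{−q₁} + A₂e^{−q₂}` with `d₁ ≤ d₂` positive, a nontrivial
first integral linear in momenta exists on `V_H` iff `d₁ = d₂ = 5`. -/
theorem linear_first_integral_iff_five_five
    (d1 d2 : ℕ) (hd1pos : 0 < d1) (hd2pos : 0 < d2) (hle : d1 ≤ d2)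
    (A1 A2 : ℝ) (hA1 : 0 < A1) (hA2 : 0 < A2)
    (S : (Fin 2 → ℝ) → ℝ)
    (hS : S = fun q => A1 * Real.exp (-(q 0)) + A2 * Real.exp (-(q 1))) :
    (∃ F1 F2 F0 : (Fin 2 → ℝ) → ℝ,
      ContDiff ℝ 1 F1 ∧ ContDiff ℝ 1 F2 ∧ ContDiff ℝ 1 F0 ∧
      (F1 ≠ 0 ∨ F2 ≠ 0) ∧
      ∀ q p : Fin 2 → ℝ, Ham d1 d2 S q p = 0 →
        poisson (fun q' p' => F1 q' * p' 0 + F2 q' * p' 1 + F0 q') (Ham d1 d2 S) q p = 0) ↔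
    (d1 = 5 ∧ d2 = 5) :=
  linear_first_integral_iff_five_five_general one_ne_zero hd1pos hd2pos hA1.ne' hA2.ne' S hS
end
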